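/- arXiv:2010.06754 — 3 statements merged into one kernel-verified Lean document; each statement's English description precedes it below -/
import Mathlib

section
/- There exist a constant c > 0 and an integer m₀ ≥ 3 such that the following holds: let (D, Ω) be a solution of the rotating patch equation with |D| = π, where ∂D = {(1 + u(θ))(cos θ, sin θ) : θ ∈ 𝕋} for a C² function u : 𝕋 → (−1, ∞) that is even, (2π/m)-periodic for some integer m ≥ m₀, satisfies u′(θ) < 0 for all θ ∈ (0, π/m), and has ‖u‖_{L∞(𝕋)} ≤ 1/2. Then ‖u‖_{L∞(𝕋)} ≤ c/m. -/
/-!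
Put `V γ = 1 + u ((π + γ) / m)`, an even profile that increases on `[0, π]` from its minimum `V 0`
to its maximum `V π`. By the factorization of `z ^ m - w ^ m` and the `m`-fold symmetry,
`2π (1_D * N)` at the boundary point of radius `V ν` equals `W (V ν ²) + Θ ν / m`
(`potential_eq`). Here `W` is the radial part, and `Θ` (called `Th`) is an integral over the radii
`s ∈ [V 0, V π]` of slices of the mean-zero kernel `-log |1 - q e^{iγ}|` with
`q = (min / max)^m ≤ e^{-2m|V ν - s|/3}`.

As a function of `ρ = V²`, `W` is concave, with second derivative at most a negative multiple of
`ν` to the right of `V ν ²`. The boundary equation `W (ρ) + Θ / m = Ω ρ + C` therefore makes `Θ`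
convex in `ρ`, with second differences over steps `h` at least of order `m ν h²` (`Th_sub`,
`Th_second`). On the other hand the decay of `q` gives `|Θ| = O(1/m)` (`abs_Th_le`), which
contradicts convexity with `h = κ/m`, `κ` large, unless `ν` is small.

For small `ν` a bound proportional to `ν` is needed. Slices are nonnegative near the minimum
(`Th_nonneg`) and `Θ π ≤ 0` (`Th_pi_nonpos`), so by convexity `Θ ν ≤ Θ 0` (`Th_le_Th_zero`). The far
slices at `0` are smaller than those at `ν` by a factor `q`; absorbing them leaves
`Θ 0 = O(ν' / m)` for `ν'` only two steps of length `κ/m` above the minimum (`Th_zero_le`).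

Hence `V π - V 0 ≤ 8κ/m` (`core_bound`), and the area constraint gives `V 0 ≤ 1 ≤ V π`.
-/

open MeasureTheory Set Real Bornology

noncomputable section

/-- The plane `ℝ²`. -/
abbrev R2 : Type := EuclideanSpace ℝ (Fin 2)

/-- The point of `ℝ²` with given coordinates. -/
def pt (a b : ℝ) : R2 := (EuclideanSpace.equiv (Fin 2) ℝ).symm ![a, b]

/-- The 2D Newtonian potential kernel `N(x) = (1/(2π)) log |x|`. -/
def nker (x : R2) : ℝ := (1 / (2 * π)) * Real.log ‖x‖

/-- The convolution `1_D * N`. -/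
def patchConv (D : Set R2) (x : R2) : ℝ := ∫ y in D, nker (x - y)

/-- The relative stream function `Ψ(x) = (1_D * N)(x) − (Ω/2)|x|²`. -/
def streamFun (D : Set R2) (Ω : ℝ) (x : R2) : ℝ := patchConv D x - Ω / 2 * ‖x‖ ^ 2

/-- `(D, Ω)` is a solution of the rotating patch equation: `D` is a bounded open
simply connected set whose boundary is a `C²` Jordan curve, and `Ψ` is constant
on `∂D`. -/
def IsPatchSolution (D : Set R2) (Ω : ℝ) : Prop :=
  IsOpen D ∧ IsBounded D ∧ SimplyConnectedSpace D ∧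
  (∃ γ : ℝ → R2,
      ContDiff ℝ 2 γ ∧ Function.Periodic γ (2 * π) ∧
      Set.InjOn γ (Set.Ico 0 (2 * π)) ∧ (∀ t, deriv γ t ≠ 0) ∧
      Set.range γ = frontier D) ∧
  (∃ c : ℝ, ∀ x ∈ frontier D, streamFun D Ω x = c)

/-- Rotation of the plane by angle `α` about the origin. -/
def rot (α : ℝ) (x : R2) : R2 :=
  pt (Real.cos α * x 0 - Real.sin α * x 1) (Real.sin α * x 0 + Real.cos α * x 1)

/-- `D` is `m`-fold symmetric. -/
def MFoldSymmetric (m : ℕ) (D : Set R2) : Prop := rot (2 * π / m) '' D = D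

/-- Polar coordinates point `r(cos θ, sin θ)`. -/
def polar (r θ : ℝ) : R2 := pt (r * Real.cos θ) (r * Real.sin θ)

/-- The star-shaped domain with polar graph boundary `1 + u`. -/
def polarDomain (u : ℝ → ℝ) : Set R2 :=
  {x | ∃ r θ : ℝ, 0 ≤ r ∧ r < 1 + u θ ∧ x = polar r θ}

/-- The polar graph `{(1+u(θ))(cos θ, sin θ)}`. -/
def polarGraph (u : ℝ → ℝ) : Set R2 := {x | ∃ θ : ℝ, x = polar (1 + u θ) θ}

/-- `L^∞` norm of a (continuous periodic) function on the torus. -/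
def supNorm (u : ℝ → ℝ) : ℝ := ⨆ θ : ℝ, |u θ|

/-- The Fraenkel asymmetry. -/
def fraenkel (D : Set R2) : ℝ :=
  sInf (Set.range fun x : R2 =>
    (volume (symmDiff D (Metric.ball x (Real.sqrt ((volume D).toReal / π))))).toReal
      / (volume D).toReal)

/-- Asymmetry with respect to the unit disk centered at the origin. -/
def asym0 (D : Set R2) : ℝ :=
  (volume (symmDiff D (Metric.ball (0 : R2) 1))).toReal / π

/-- The Laplacian in the plane. -/
def lap (p : R2 → ℝ) (x : R2) : ℝ :=
  ∑ i : Fin 2,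
    fderiv ℝ (fun y => fderiv ℝ p y (EuclideanSpace.single i 1)) x (EuclideanSpace.single i 1)

/-- The radial function `g(r) = ℋ¹(∂B_r ∩ D)/(2πr)`, as a function on the plane. -/
def sliceg (D : Set R2) (y : R2) : ℝ :=
  (μH[1] (Metric.sphere (0 : R2) ‖y‖ ∩ D)).toReal / (2 * π * ‖y‖)

/-- Convolution of `f` with the Newtonian potential over the plane. -/
def convN (f : R2 → ℝ) (x : R2) : ℝ := ∫ y, f y * nker (x - y)

/-! ### The kernel and its arc integrals -/

/-- The kernel `-log |1 - q e^{iγ}|`, written with the squared modulus inside the logarithm. With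
`q = (min r s / max r s)^m` it is minus the nonradial part of the logarithmic potential of `m`
unit charges placed symmetrically on a circle. -/
def fk (q γ : ℝ) : ℝ := -(1 / 2) * Real.log (1 - 2 * q * Real.cos γ + q ^ 2)

lemma fk_arg_nonneg (q γ : ℝ) : 0 ≤ 1 - 2 * q * Real.cos γ + q ^ 2 := by
  nlinarith [sq_nonneg (q - Real.cos γ), Real.sin_sq_add_cos_sq γ, sq_nonneg (Real.sin γ)]

lemma fk_arg_ge {q : ℝ} (hq : 0 ≤ q) (γ : ℝ) :
    (1 - q) ^ 2 ≤ 1 - 2 * q * Real.cos γ + q ^ 2 := by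
  nlinarith [Real.cos_le_one γ]

lemma fk_arg_le {q : ℝ} (hq : 0 ≤ q) (γ : ℝ) :
    1 - 2 * q * Real.cos γ + q ^ 2 ≤ (1 + q) ^ 2 := by
  nlinarith [Real.neg_one_le_cos γ]

lemma fk_arg_pos {q : ℝ} (hq : 0 ≤ q) (hq1 : q < 1) (γ : ℝ) :
    0 < 1 - 2 * q * Real.cos γ + q ^ 2 :=
  lt_of_lt_of_le (by have : 0 < 1 - q := by linarith
                     positivity) (fk_arg_ge hq γ)

lemma fk_nonneg {q γ : ℝ} (hq : 0 ≤ q) (hq1 : q ≤ 1) (h : 1 / 2 ≤ Real.cos γ) :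
    0 ≤ fk q γ := by
  unfold fk
  have := Real.log_nonpos (fk_arg_nonneg q γ) (by nlinarith)
  linarith

lemma fk_neg (q γ : ℝ) : fk q (-γ) = fk q γ := by simp [fk]

lemma abs_fk_le {q : ℝ} (hq : 0 ≤ q) (hq1 : q < 1) (γ : ℝ) :
    |fk q γ| ≤ -Real.log (1 - q) := by
  have h1 := Real.log_le_log (by have : 0 < 1 - q := by linarith
                                 positivity) (fk_arg_ge hq γ)
  have h2 := Real.log_le_log (fk_arg_pos hq hq1 γ) (fk_arg_le hq γ)
  rw [Real.log_pow] at h1 h2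
  have h3 : Real.log (1 + q) ≤ -Real.log (1 - q) := by
    have := Real.log_le_sub_one_of_pos (show 0 < 1 + q by linarith)
    have := Real.log_le_sub_one_of_pos (show 0 < 1 - q by linarith)
    linarith
  unfold fk
  push_cast at h1 h2
  rw [abs_le]; constructor <;> linarith

lemma fk_continuous {q : ℝ} (hq : 0 ≤ q) (hq1 : q < 1) : Continuous (fk q) := by
  unfold fk
  exact continuous_const.mul (Continuous.log (by fun_prop) fun γ => (fk_arg_pos hq hq1 γ).ne')

lemma fk_measurable : Measurable (Function.uncurry fk) := by
  unfold fk Function.uncurry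
  fun_prop

lemma fk_antitone {q : ℝ} (hq : 0 ≤ q) (hq1 : q < 1) : AntitoneOn (fk q) (Icc 0 π) := by
  intro x hx y hy hxy
  unfold fk
  have h := Real.cos_le_cos_of_nonneg_of_le_pi hx.1 hy.2 hxy
  have := Real.log_le_log (fk_arg_pos hq hq1 x)
    (show 1 - 2 * q * Real.cos x + q ^ 2 ≤ 1 - 2 * q * Real.cos y + q ^ 2 by nlinarith)
  linarith

/-- For small `q` the kernel is `q cos γ` up to a quadratic error. -/
lemma fk_approx {q : ℝ} (hq : 0 ≤ q) (hq1 : q ≤ 1 / 32) (γ : ℝ) :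
    |fk q γ - q * Real.cos γ| ≤ 5 * q ^ 2 := by
  have hp := fk_arg_pos hq (by linarith) γ
  have hc := Real.cos_le_one γ
  have hc' := Real.neg_one_le_cos γ
  have h1 := Real.log_le_sub_one_of_pos hp
  have h2 := Real.one_sub_inv_le_log_of_pos hp
  set t := -2 * q * Real.cos γ + q ^ 2 with ht
  have e : 1 - 2 * q * Real.cos γ + q ^ 2 = 1 + t := by rw [ht]; ring
  have ht1 : |t| ≤ 17 / 8 * q := by
    rw [ht, abs_le]; constructor <;> nlinarith
  have ht2 : t ^ 2 ≤ 5 * q ^ 2 := by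
    have := sq_abs t
    nlinarith [abs_nonneg t]
  have ht3 := abs_le.1 ht1
  have h3 : t - 2 * t ^ 2 ≤ 1 - (1 + t)⁻¹ := by
    have hpos : 0 < 1 + t := by linarith
    have : 1 - (1 + t)⁻¹ - (t - 2 * t ^ 2) = t ^ 2 * (1 + 2 * t) / (1 + t) := by
      field_simp; ring
    have : 0 ≤ t ^ 2 * (1 + 2 * t) / (1 + t) := by
      apply div_nonneg _ hpos.le
      apply mul_nonneg (sq_nonneg _); linarith
    linarith
  unfold fk
  rw [e] at h1 h2 ⊢
  rw [abs_le]; constructor <;> nlinarith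

lemma fk_periodic (q : ℝ) : Function.Periodic (fk q) (2 * π) := by
  intro γ; simp [fk]

lemma fk_eq_norm (q γ : ℝ) :
    fk q γ = -Real.log ‖(circleMap 0 1 γ : ℂ) - (q : ℂ)‖ := by
  have : ‖(circleMap 0 1 γ : ℂ) - (q : ℂ)‖ ^ 2 = 1 - 2 * q * Real.cos γ + q ^ 2 := by
    rw [← Complex.normSq_eq_norm_sq, Complex.normSq_apply]
    simp [circleMap, Complex.exp_re, Complex.exp_im]
    nlinarith [Real.sin_sq_add_cos_sq γ]
  unfold fk
  rw [← this, Real.log_pow]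
  push_cast; ring

/-- The kernel has mean zero: `log |e^{iγ} - q|` has vanishing circle average for `q < 1`. -/
lemma fk_mean {q : ℝ} (hq : 0 ≤ q) (hq1 : q < 1) (ν : ℝ) :
    ∫ γ in (-π)..π, fk q (ν - γ) = 0 := by
  have h := circleAverage_log_norm_sub_const₀ (a := (q : ℂ))
    (by simpa [abs_of_nonneg hq] using hq1)
  rw [circleAverage_def, smul_eq_mul] at h
  have h0 : ∫ θ in (0 : ℝ)..2 * π, fk q θ = 0 := by
    simp_rw [fk_eq_norm, intervalIntegral.integral_neg]
    have : (2 * π)⁻¹ ≠ 0 := by positivity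
    simpa [this] using h
  rw [intervalIntegral.integral_comp_sub_left (fun x => fk q x)]
  have := (fk_periodic q).intervalIntegral_add_eq (ν - π) 0
  rw [zero_add, h0] at this
  rw [← this]; congr 1; ring

lemma fk_shift_integrable {q : ℝ} (hq : 0 ≤ q) (hq1 : q < 1) (ν a b : ℝ) :
    IntervalIntegrable (fun γ => fk q (ν - γ)) volume a b :=
  ((fk_continuous hq hq1).comp (by fun_prop)).intervalIntegrable _ _

/-- The integral of the kernel `fk q`, centred at `ν`, over the symmetric arc `[-w, w]`. -/
def Qf (q w ν : ℝ) : ℝ := ∫ γ in (-w)..w, fk q (ν - γ)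

lemma sin_ge_min {w : ℝ} (h0 : 0 ≤ w) (h1 : w ≤ π) : 2 / π * min w (π - w) ≤ Real.sin w := by
  rcases le_total w (π / 2) with h | h
  · rw [min_eq_left (by linarith)]; exact Real.mul_le_sin h0 h
  · rw [min_eq_right (by linarith), ← Real.sin_pi_sub]
    exact Real.mul_le_sin (by linarith) (by linarith)

/-- For small `q` the arc integral is close to its first Fourier mode, with an error that is still
proportional to `sin w`: by the mean-zero property the error can be estimated on the arc or on its
complement, whichever is shorter. -/
lemma Qf_approx {q w : ℝ} (hq : 0 ≤ q) (hq1 : q ≤ 1 / 32) (h0 : 0 ≤ w) (h1 : w ≤ π) (ν : ℝ) :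
    |Qf q w ν - 2 * q * Real.cos ν * Real.sin w| ≤ 1 / 2 * q * Real.sin w := by
  have hq2 : q < 1 := by linarith
  have hci : ∀ a b, IntervalIntegrable (fun γ => q * Real.cos (ν - γ)) volume a b := fun a b =>
    (by fun_prop : Continuous fun γ => q * Real.cos (ν - γ)).intervalIntegrable _ _
  have hcos : ∀ a b, ∫ γ in a..b, q * Real.cos (ν - γ) =
      q * (Real.sin (ν - a) - Real.sin (ν - b)) := by
    intro a b
    rw [intervalIntegral.integral_const_mul, intervalIntegral.integral_comp_sub_left, integral_cos]
  let e : ℝ → ℝ := fun γ => fk q (ν - γ) - q * Real.cos (ν - γ)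
  have hei : ∀ a b, IntervalIntegrable e volume a b := fun a b =>
    (fk_shift_integrable hq hq2 ν a b).sub (hci a b)
  have hE : ∀ a b, ∫ γ in a..b, e γ =
      (∫ γ in a..b, fk q (ν - γ)) - q * (Real.sin (ν - a) - Real.sin (ν - b)) := by
    intro a b
    rw [← hcos, ← intervalIntegral.integral_sub (fk_shift_integrable hq hq2 ν a b) (hci a b)]
  have key : Qf q w ν - 2 * q * Real.cos ν * Real.sin w = ∫ γ in (-w)..w, e γ := by
    rw [hE, Qf, Real.sin_sub, Real.sin_sub, Real.sin_neg, Real.cos_neg]; ring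
  have hb : ∀ a b, a ≤ b → |∫ γ in a..b, e γ| ≤ 5 * q ^ 2 * (b - a) := by
    intro a b hab
    have := intervalIntegral.norm_integral_le_of_norm_le_const (a := a) (b := b) (f := e)
      (C := 5 * q ^ 2) (fun γ _ => fk_approx hq hq1 _)
    rwa [abs_of_nonneg (by linarith : 0 ≤ b - a)] at this
  have htot : ∫ γ in (-π)..π, e γ = 0 := by
    rw [hE, fk_mean hq hq2]; simp
  have hsplit : (∫ γ in (-π)..(-w), e γ) + (∫ γ in (-w)..w, e γ) + ∫ γ in w..π, e γ = 0 := by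
    rw [intervalIntegral.integral_add_adjacent_intervals (hei _ _) (hei _ _),
      intervalIntegral.integral_add_adjacent_intervals (hei _ _) (hei _ _), htot]
  have b1 := hb (-w) w (by linarith)
  have b2 := hb (-π) (-w) (by linarith)
  have b3 := hb w π h1
  have hs := sin_ge_min h0 h1
  have hmin : min w (π - w) ≤ π / 2 * Real.sin w := by
    have := mul_le_mul_of_nonneg_left hs (by positivity : 0 ≤ π / 2)
    calc _ = π / 2 * (2 / π * min w (π - w)) := by field_simp
      _ ≤ _ := this
  have hI : |∫ γ in (-w)..w, e γ| ≤ 10 * q ^ 2 * min w (π - w) := by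
    rw [abs_le] at *
    rcases le_total w (π - w) with h | h
    · rw [min_eq_left h]; constructor <;> linarith
    · rw [min_eq_right h]; constructor <;> linarith
  rw [key]
  refine hI.trans ?_
  have hpi := Real.pi_lt_d2
  have hsin : 0 ≤ Real.sin w := Real.sin_nonneg_of_nonneg_of_le_pi h0 h1
  calc 10 * q ^ 2 * min w (π - w) ≤ 10 * q ^ 2 * (π / 2 * Real.sin w) := by gcongr
    _ = (5 * π * q) * (q * Real.sin w) := by ring
    _ ≤ (1 / 2) * (q * Real.sin w) := by
        apply mul_le_mul_of_nonneg_right _ (by positivity)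
        nlinarith
    _ = _ := by ring

lemma Qf_lower {q w ν : ℝ} (hq : 0 ≤ q) (hq1 : q ≤ 1 / 32) (h0 : 0 ≤ w) (h1 : w ≤ π)
    (hν : 3 / 4 ≤ Real.cos ν) : q * Real.sin w ≤ Qf q w ν := by
  have := (abs_le.1 (Qf_approx hq hq1 h0 h1 ν)).1
  have hs : 0 ≤ q * Real.sin w := mul_nonneg hq (Real.sin_nonneg_of_nonneg_of_le_pi h0 h1)
  nlinarith

lemma Qf_upper {q w : ℝ} (hq : 0 ≤ q) (hq1 : q ≤ 1 / 32) (h0 : 0 ≤ w) (h1 : w ≤ π) :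
    Qf q w 0 ≤ 3 * (q * Real.sin w) := by
  have := (abs_le.1 (Qf_approx hq hq1 h0 h1 0)).2
  have hs : 0 ≤ q * Real.sin w := mul_nonneg hq (Real.sin_nonneg_of_nonneg_of_le_pi h0 h1)
  rw [Real.cos_zero] at this
  nlinarith

lemma abs_Qf_le {q w : ℝ} (hq : 0 ≤ q) (hq1 : q < 1) (h0 : 0 ≤ w) (ν : ℝ) :
    |Qf q w ν| ≤ 2 * w * -Real.log (1 - q) := by
  have := intervalIntegral.norm_integral_le_of_norm_le_const (a := -w) (b := w)
      (f := fun γ => fk q (ν - γ)) (C := -Real.log (1 - q)) (fun γ _ => abs_fk_le hq hq1 _)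
  rw [abs_of_nonneg (by linarith : 0 ≤ w - -w), Real.norm_eq_abs] at this
  unfold Qf; linarith

lemma Qf_nonneg {q w ν : ℝ} (hq : 0 ≤ q) (hq1 : q ≤ 1) (h0 : 0 ≤ w) (hw : w ≤ π / 6)
    (hν0 : 0 ≤ ν) (hν : ν ≤ π / 6) : 0 ≤ Qf q w ν := by
  apply intervalIntegral.integral_nonneg (by linarith)
  intro γ hγ
  apply fk_nonneg hq hq1
  rw [← Real.cos_pi_div_three, ← Real.cos_abs (ν - γ)]
  apply Real.cos_le_cos_of_nonneg_of_le_pi (abs_nonneg _) (by linarith [Real.pi_pos])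
  rw [abs_le]; constructor <;> linarith [hγ.1, hγ.2]

/-- At the outermost boundary point the kernel is seen from the far side, so partial integrals
are nonpositive. -/
lemma Qf_pi_nonpos {q w : ℝ} (hq : 0 ≤ q) (hq1 : q < 1) (h0 : 0 ≤ w) (h1 : w ≤ π) :
    Qf q w π ≤ 0 := by
  have hi := fun a b => fk_shift_integrable hq hq1 π a b
  have hsplit : (∫ γ in (-π)..(-w), fk q (π - γ)) + (∫ γ in (-w)..w, fk q (π - γ))
      + ∫ γ in w..π, fk q (π - γ) = 0 := by
    rw [intervalIntegral.integral_add_adjacent_intervals (hi _ _) (hi _ _),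
      intervalIntegral.integral_add_adjacent_intervals (hi _ _) (hi _ _), fk_mean hq hq1]
  have hsym : ∀ γ, fk q (π - -γ) = fk q (π - γ) := by
    intro γ
    rw [← fk_neg q (π - γ), ← fk_periodic q (-(π - γ))]; congr 1; ring
  have hin : ∀ γ ∈ Icc (0:ℝ) w, fk q (π - γ) ≤ fk q (π - w) := fun γ hγ =>
    fk_antitone hq hq1 ⟨by linarith, by linarith⟩ ⟨by linarith [hγ.2], by linarith [hγ.1]⟩
      (by linarith [hγ.2])
  have hout : ∀ γ ∈ Icc w π, fk q (π - w) ≤ fk q (π - γ) := fun γ hγ =>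
    fk_antitone hq hq1 ⟨by linarith [hγ.2], by linarith [hγ.1]⟩ ⟨by linarith, by linarith⟩
      (by linarith [hγ.1])
  have i1 : ∫ γ in (-w)..w, fk q (π - γ) ≤ ∫ γ in (-w)..w, fk q (π - w) := by
    apply intervalIntegral.integral_mono_on (by linarith) (hi _ _) (by simp)
    intro γ hγ
    rcases le_total 0 γ with h | h
    · exact hin γ ⟨h, hγ.2⟩
    · rw [← hsym]; exact hin (-γ) ⟨by linarith, by linarith [hγ.1]⟩
  have i2 : ∫ γ in w..π, fk q (π - w) ≤ ∫ γ in w..π, fk q (π - γ) :=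
    intervalIntegral.integral_mono_on h1 (by simp) (hi _ _) hout
  have i3 : ∫ γ in (-π)..(-w), fk q (π - w) ≤ ∫ γ in (-π)..(-w), fk q (π - γ) := by
    apply intervalIntegral.integral_mono_on (by linarith) (by simp) (hi _ _)
    intro γ hγ
    rw [← hsym γ]; exact hout (-γ) ⟨by linarith [hγ.2], by linarith [hγ.1]⟩
  simp only [intervalIntegral.integral_const, smul_eq_mul] at i1 i2 i3
  unfold Qf
  by_contra hc
  push Not at hc
  have : 0 < fk q (π - w) := by
    by_contra h
    nlinarith
  nlinarith

/-- The integrable majorant `y^{-1/2} e^{-y/4}` of `-log (1 - e^{-y})` (up to a factor `2`). -/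
def Phi (y : ℝ) : ℝ := y ^ (-(1 / 2) : ℝ) * Real.exp (-(1 / 4) * y)

lemma ell_le_Phi {q y : ℝ} (hy : 0 < y) (hq : 0 ≤ q) (h : q ≤ Real.exp (-y)) :
    -Real.log (1 - q) ≤ 2 * Phi y := by
  have he : Real.exp (-y) < 1 := by rw [Real.exp_lt_one_iff]; linarith
  have h1 : -Real.log (1 - q) ≤ -Real.log (1 - Real.exp (-y)) := by
    apply neg_le_neg; apply Real.log_le_log <;> linarith
  refine h1.trans ?_
  have hd : 0 < 1 - Real.exp (-y) := by linarith
  -- `e^y - 1 = 2 e^{y/2} sinh (y/2)` and `y/2 ≤ sinh (y/2)`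
  have hs : y * Real.exp (y / 2) ≤ Real.exp y - 1 := by
    have := Real.self_le_sinh_iff.2 (show 0 ≤ y / 2 by linarith)
    rw [Real.sinh_eq] at this
    have e1 : Real.exp y = Real.exp (y / 2) * Real.exp (y / 2) := by
      rw [← Real.exp_add]; congr 1; ring
    have e2 : Real.exp (-(y / 2)) * Real.exp (y / 2) = 1 := by
      rw [← Real.exp_add]; simp
    nlinarith [Real.exp_pos (y / 2)]
  set P := Phi y with hP
  have hPpos : 0 < P := by unfold P Phi; positivity
  have hPsq : P ^ 2 * (y * Real.exp (y / 2)) = 1 := by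
    have a1 : (y ^ (-(1 / 2) : ℝ)) ^ 2 = y⁻¹ := by
      rw [← Real.rpow_natCast, ← Real.rpow_mul hy.le, ← Real.rpow_neg_one]; norm_num
    have a2 : Real.exp (-(1 / 4) * y) ^ 2 * Real.exp (y / 2) = 1 := by
      rw [← Real.exp_nat_mul, ← Real.exp_add]; simp; ring
    rw [hP, Phi, mul_pow, a1]
    field_simp
    calc _ = Real.exp (-(1 / 4) * y) ^ 2 * Real.exp (y / 2) := by congr 2; ring_nf
      _ = 1 := a2
  -- `1 / (1 - e^{-y}) = 1 + 1/(e^y - 1) ≤ 1 + P^2 ≤ (1 + P)^2 ≤ e^{2P}`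
  rw [← Real.log_inv, Real.log_le_iff_le_exp (by positivity)]
  have e3 : Real.exp (-y) * Real.exp y = 1 := by rw [← Real.exp_add]; simp
  have hy1 : 0 < Real.exp y - 1 := by
    have := Real.add_one_lt_exp hy.ne'; linarith
  have h5 : (1 - Real.exp (-y))⁻¹ ≤ 1 + P ^ 2 := by
    rw [inv_le_iff_one_le_mul₀ hd]
    have : 1 ≤ P ^ 2 * (Real.exp y - 1) := by
      have := mul_le_mul_of_nonneg_left hs (sq_nonneg P); linarith
    nlinarith [Real.exp_pos (-y)]
  refine h5.trans ?_
  have h6 := Real.add_one_le_exp P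
  have h7 : Real.exp (2 * P) = Real.exp P * Real.exp P := by rw [← Real.exp_add]; ring_nf
  nlinarith

lemma Phi_integrable : IntegrableOn Phi (Ioi 0) := by
  have := integrableOn_rpow_mul_exp_neg_mul_rpow (p := 1) (s := -(1 / 2)) (b := 1 / 4)
    (by norm_num) (by norm_num) (by norm_num)
  simp only [Real.rpow_one] at this
  exact this

lemma Phi_nonneg {y : ℝ} (hy : 0 ≤ y) : 0 ≤ Phi y := by unfold Phi; positivity

/-- The decay factor `(min r s / max r s)^m` between the radii `r` and `s`. -/
def qf (m : ℕ) (r s : ℝ) : ℝ := (min r s / max r s) ^ m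

lemma qf_nonneg {m : ℕ} {r s : ℝ} (hr : 0 < r) (hs : 0 < s) : 0 ≤ qf m r s := by
  unfold qf; have := lt_min hr hs; have := hr.trans_le (le_max_left r s); positivity

lemma qf_le_exp {m : ℕ} {r s : ℝ} (hr : 0 < r) (hs : 0 < s) (hr' : r ≤ 3 / 2) (hs' : s ≤ 3 / 2) :
    qf m r s ≤ Real.exp (-(2 / 3 * m * |r - s|)) := by
  have h1 : 0 < max r s := lt_max_of_lt_left hr
  have h2 : 0 < min r s := lt_min hr hs
  have h3 : max r s ≤ 3 / 2 := max_le hr' hs'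
  have h4 : |r - s| = max r s - min r s := (max_sub_min_eq_abs' r s).symm
  have h5 : min r s / max r s ≤ Real.exp (-(2 / 3 * |r - s|)) := by
    have := Real.add_one_le_exp (-(2 / 3 * |r - s|))
    refine le_trans ?_ this
    rw [div_le_iff₀ h1, h4]
    have : min r s ≤ max r s := min_le_max
    nlinarith
  calc qf m r s ≤ Real.exp (-(2 / 3 * |r - s|)) ^ m := by
        unfold qf; gcongr
    _ = _ := by rw [← Real.exp_nat_mul]; congr 1; ring

lemma qf_lt_one {m : ℕ} (hm : 0 < m) {r s : ℝ} (hr : 0 < r) (hs : 0 < s) (h : r ≠ s) :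
    qf m r s < 1 := by
  have h1 : 0 < max r s := lt_max_of_lt_left hr
  have h2 : 0 < min r s := lt_min hr hs
  unfold qf
  apply pow_lt_one₀ (by positivity) _ hm.ne'
  rw [div_lt_one h1]; exact min_lt_max.2 h

lemma qf_le_one {m : ℕ} {r s : ℝ} (hr : 0 < r) (hs : 0 < s) : qf m r s ≤ 1 := by
  have h1 : 0 < max r s := lt_max_of_lt_left hr
  have h2 : 0 < min r s := lt_min hr hs
  unfold qf
  apply pow_le_one₀ (by positivity)
  rw [div_le_one h1]; exact min_le_max

/-- The decay factor is multiplicative along increasing radii. -/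
lemma qf_mul {m : ℕ} {a r s : ℝ} (ha : 0 < a) (hr : a ≤ r) (hs : r ≤ s) :
    qf m a s = qf m a r * qf m r s := by
  unfold qf
  rw [min_eq_left hr, max_eq_right hr, min_eq_left hs, max_eq_right hs, min_eq_left (hr.trans hs),
    max_eq_right (hr.trans hs), ← mul_pow]
  congr 1
  have : 0 < r := by linarith
  have : 0 < s := by linarith
  field_simp

lemma qf_measurable (m : ℕ) (r : ℝ) : Measurable (qf m r) := by
  unfold qf; fun_prop

/-- The constant `∫₀^∞ y^{-1/2} e^{-y/4} dy`. -/
def PhiConst : ℝ := ∫ y in Ioi (0 : ℝ), Phi y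

lemma PhiConst_nonneg : 0 ≤ PhiConst :=
  setIntegral_nonneg measurableSet_Ioi fun _ hy => Phi_nonneg (le_of_lt hy)

lemma Phi_abs_integrable : Integrable (fun y : ℝ => Phi |y|) := by
  have h1 : IntegrableOn (fun y : ℝ => Phi |y|) (Ioi 0) :=
    Phi_integrable.congr_fun (fun y hy => by rw [abs_of_pos hy]) measurableSet_Ioi
  have h2 : IntegrableOn (fun y : ℝ => Phi |y|) (Iic 0) := by
    rw [← Measure.map_neg_eq_self (volume : Measure ℝ)]
    have hm : MeasurableEmbedding fun x : ℝ => -x := (Homeomorph.neg ℝ).measurableEmbedding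
    rw [hm.integrableOn_map_iff]
    simp_rw [Function.comp_def, abs_neg, neg_preimage, neg_Iic, neg_zero]
    exact Iff.mpr integrableOn_Ici_iff_integrableOn_Ioi h1
  rw [← integrableOn_univ, ← Iic_union_Ioi (a := (0 : ℝ)), integrableOn_union]
  exact ⟨h2, h1⟩

lemma Phi_scaled_integrable {m : ℕ} (hm : 0 < m) (r : ℝ) :
    Integrable (fun s : ℝ => Phi (2 / 3 * m * |r - s|)) := by
  have hc : (2 / 3 * m : ℝ) ≠ 0 := by positivity
  have := (Phi_abs_integrable.comp_mul_left' hc).comp_sub_left r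
  refine this.congr (Filter.Eventually.of_forall fun s => ?_)
  simp only [abs_mul]
  rw [abs_of_pos (show (0:ℝ) < 2 / 3 by norm_num), Nat.abs_cast]

/-- Rescaling by `m` gains a factor `1/m`. -/
lemma Phi_scaled_integral {m : ℕ} (hm : 0 < m) (r : ℝ) :
    ∫ s : ℝ, Phi (2 / 3 * m * |r - s|) = 3 * PhiConst / m := by
  have hc : (0 : ℝ) < 2 / 3 * m := by positivity
  have e : ∀ s : ℝ, Phi (2 / 3 * m * |r - s|) = (fun x => Phi |2 / 3 * m * x|) (r - s) := by
    intro s; simp only [abs_mul]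
    rw [abs_of_pos (show (0:ℝ) < 2 / 3 by norm_num), Nat.abs_cast]
  simp_rw [e]
  rw [integral_sub_left_eq_self (fun x => Phi |2 / 3 * m * x|) volume r,
    Measure.integral_comp_mul_left (fun y => Phi |y|), integral_comp_abs (f := Phi)]
  rw [abs_of_pos (by positivity), smul_eq_mul, PhiConst]
  field_simp

/-- Arc integrals of the kernel are concentrated within distance `O(1/m)` of the radius `r`. -/
lemma abs_Qf_le_Phi {m : ℕ} (hm : 0 < m) {r s w : ℝ} (hr : 0 < r) (hs : 0 < s) (hr' : r ≤ 3 / 2)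
    (hs' : s ≤ 3 / 2) (h : r ≠ s) (h0 : 0 ≤ w) (ν : ℝ) :
    |Qf (qf m r s) w ν| ≤ 4 * w * Phi (2 / 3 * m * |r - s|) := by
  have h1 := abs_Qf_le (qf_nonneg (m := m) hr hs) (qf_lt_one hm hr hs h) h0 ν
  have hpos : 0 < |r - s| := abs_pos.2 (sub_ne_zero.2 h)
  have h2 := ell_le_Phi (by positivity) (qf_nonneg (m := m) hr hs) (qf_le_exp (m := m) hr hs hr' hs')
  nlinarith

/-! ### Estimates for profiles satisfying the boundary equation -/

/-- The properties of the rescaled boundary radius `V γ = 1 + u ((π + γ) / m)` that the estimates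
use. The shift by `π` puts the minimum of `V` at `γ = 0` and its maximum at `γ = π`. -/
structure Profile (V : ℝ → ℝ) : Prop where
  cont : Continuous V
  even : ∀ γ, V (-γ) = V γ
  mono : StrictMonoOn V (Icc 0 π)
  lo : ∀ γ, 1 / 2 ≤ V γ
  hi : ∀ γ, V γ ≤ 3 / 2

/-- The contribution of the circle of radius `s` to the nonradial part of the potential at the
boundary point with parameter `ν`, up to a factor `s/m`. The integral runs over `{V < s}`, the part of the circle outside
the domain; as the kernel has mean zero, this is minus the integral over the part inside. -/
def Hf (V : ℝ → ℝ) (m : ℕ) (ν s : ℝ) : ℝ :=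
  ∫ γ in (-π)..π, if V γ < s then fk (qf m (V ν) s) (ν - γ) else 0

/-- The nonradial part of the boundary potential, up to a factor `1/m`. Only the radii `s` between
the minimum and the maximum of `V` contribute. -/
def Th (V : ℝ → ℝ) (m : ℕ) (ν : ℝ) : ℝ := ∫ s in (V 0)..(V π), s * Hf V m ν s

/-- The value of `∫₀^R s log (max √ρ s) ds`, as a function of `ρ`. -/
def uu (R ρ : ℝ) : ℝ := R ^ 2 / 4 * Real.log (max ρ (R ^ 2)) + (ρ - max ρ (R ^ 2)) / 4

/-- The radial part of the potential at squared radius `ρ`, i.e. the potential of the circular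
averages of the domain. -/
def Wf (V : ℝ → ℝ) (ρ : ℝ) : ℝ := ∫ γ in (-π)..π, uu (V γ) ρ

lemma Profile.abs {V : ℝ → ℝ} (hV : Profile V) (γ : ℝ) : V |γ| = V γ := by
  rcases abs_choice γ with h | h <;> rw [h]
  exact hV.even γ

lemma Profile.pos {V : ℝ → ℝ} (hV : Profile V) (γ : ℝ) : 0 < V γ := by linarith [hV.lo γ]

lemma Profile.lt_iff {V : ℝ → ℝ} (hV : Profile V) {w γ : ℝ} (hw : w ∈ Icc 0 π) (hγ : |γ| ≤ π) :
    V γ < V w ↔ |γ| < w := by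
  rw [← hV.abs γ]; exact hV.mono.lt_iff_lt ⟨abs_nonneg _, hγ⟩ hw

lemma Profile.le {V : ℝ → ℝ} (hV : Profile V) {w w' : ℝ} (hw : 0 ≤ w) (h : w ≤ w') (hw' : w' ≤ π) :
    V w ≤ V w' := hV.mono.monotoneOn ⟨hw, h.trans hw'⟩ ⟨hw.trans h, hw'⟩ h

lemma Profile.exists {V : ℝ → ℝ} (hV : Profile V) {s : ℝ} (hs : s ∈ Icc (V 0) (V π)) :
    ∃ w ∈ Icc 0 π, V w = s :=
  intermediate_value_Icc Real.pi_pos.le hV.cont.continuousOn hs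

/-- As `V` is even and increasing on `[0, π]`, the part of a circle outside the domain is an arc. -/
lemma Hf_eq {V : ℝ → ℝ} (hV : Profile V) (m : ℕ) (ν : ℝ) {w : ℝ} (hw : w ∈ Icc 0 π) :
    Hf V m ν (V w) = Qf (qf m (V ν) (V w)) w ν := by
  unfold Hf Qf
  rw [intervalIntegral.integral_of_le (by linarith [Real.pi_pos]),
    intervalIntegral.integral_of_le (by linarith [hw.1])]
  have hms : MeasurableSet {γ | V γ < V w} := measurableSet_lt hV.cont.measurable measurable_const
  have e : (fun γ => if V γ < V w then fk (qf m (V ν) (V w)) (ν - γ) else 0) =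
      indicator {γ | V γ < V w} (fun γ => fk (qf m (V ν) (V w)) (ν - γ)) := by
    ext γ; simp [indicator]
  rw [e, setIntegral_indicator hms, integral_Ioc_eq_integral_Ioo]
  congr 2
  ext γ
  constructor
  · rintro ⟨h1, h2⟩
    exact abs_lt.1 ((hV.lt_iff hw (abs_le.2 ⟨h1.1.le, h1.2⟩)).1 h2)
  · intro h
    have h' := abs_lt.2 h
    refine ⟨⟨by linarith [hw.2, h.1], by linarith [hw.2, h.2]⟩, ?_⟩
    exact (hV.lt_iff hw (h'.le.trans hw.2)).2 h'

lemma Hf_measurable {V : ℝ → ℝ} (hV : Profile V) (m : ℕ) (ν : ℝ) : Measurable (Hf V m ν) := by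
  have hF : Measurable (Function.uncurry fun s γ : ℝ =>
      if V γ < s then fk (qf m (V ν) s) (ν - γ) else 0) := by
    apply Measurable.ite
    · exact measurableSet_lt (hV.cont.measurable.comp measurable_snd) measurable_fst
    · exact fk_measurable.comp (((qf_measurable m (V ν)).comp measurable_fst).prodMk
        (measurable_const.sub measurable_snd))
    · exact measurable_const
  have := (hF.stronglyMeasurable.integral_prod_right (ν := volume.restrict (Ioc (-π) π))).measurable
  convert this using 2 with s
  unfold Hf
  rw [intervalIntegral.integral_of_le (by linarith [Real.pi_pos])]

lemma Hf_bound {V : ℝ → ℝ} (hV : Profile V) {m : ℕ} (hm : 0 < m) {ν ν' s : ℝ}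
    (hν' : ν' ∈ Icc 0 π) (hs : s ∈ Icc (V 0) (V ν')) (h : V ν ≠ s) :
    |s * Hf V m ν s| ≤ 6 * ν' * Phi (2 / 3 * m * |V ν - s|) := by
  obtain ⟨w, hw, rfl⟩ := hV.exists ⟨hs.1, hs.2.trans (hV.le hν'.1 hν'.2 le_rfl)⟩
  have hwν : w ≤ ν' := (hV.mono.le_iff_le hw hν').1 hs.2
  have h1 := abs_Qf_le_Phi hm (hV.pos ν) (hV.pos w) (hV.hi _) (hV.hi _) h hw.1 ν
  have h2 := Phi_nonneg (show 0 ≤ 2 / 3 * (m : ℝ) * |V ν - V w| by positivity)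
  rw [Hf_eq hV m ν hw, abs_mul, abs_of_pos (hV.pos w)]
  have := mul_le_mul (hV.hi w) h1 (abs_nonneg _) (by norm_num)
  nlinarith [mul_le_mul_of_nonneg_right hwν h2]

lemma Hf_intble {V : ℝ → ℝ} (hV : Profile V) {m : ℕ} (hm : 0 < m) (ν : ℝ) {a b : ℝ}
    (ha : a ∈ Icc (V 0) (V π)) (hb : b ∈ Icc (V 0) (V π)) :
    IntervalIntegrable (fun s => s * Hf V m ν s) volume a b := by
  have h0 : V 0 ≤ V π := ha.1.trans ha.2
  have key : IntervalIntegrable (fun s => s * Hf V m ν s) volume (V 0) (V π) := by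
    rw [intervalIntegrable_iff_integrableOn_Icc_of_le h0]
    have hb : IntegrableOn (fun s => 6 * π * Phi (2 / 3 * m * |V ν - s|)) (Icc (V 0) (V π)) :=
      ((Phi_scaled_integrable hm (V ν)).const_mul _).integrableOn
    refine hb.mono' ((measurable_id.mul (Hf_measurable hV m ν)).aestronglyMeasurable) ?_
    have hne : ∀ᵐ s : ℝ, s ≠ V ν := by simp [ae_iff, measure_singleton]
    filter_upwards [ae_restrict_mem measurableSet_Icc, ae_restrict_of_ae hne] with s hs hs'
    exact Hf_bound hV hm ⟨Real.pi_pos.le, le_rfl⟩ hs hs'.symm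
  exact key.mono_set (by rw [uIcc_of_le h0]; exact uIcc_subset_Icc ha hb)

lemma Profile.mem {V : ℝ → ℝ} (hV : Profile V) {w : ℝ} (hw : w ∈ Icc 0 π) :
    V w ∈ Icc (V 0) (V π) := ⟨hV.le le_rfl hw.1 hw.2, hV.le hw.1 hw.2 le_rfl⟩

/-- Besides the gain `1/m` there is a gain proportional to `ν'`, since the circles involved leave the
domain only along the arc `(-ν', ν')`. -/
lemma Hf_integral_bound {V : ℝ → ℝ} (hV : Profile V) {m : ℕ} (hm : 0 < m) (ν : ℝ) {ν' : ℝ}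
    (hν' : ν' ∈ Icc 0 π) :
    |∫ s in (V 0)..(V ν'), s * Hf V m ν s| ≤ 18 * ν' * PhiConst / m := by
  have h0 : V 0 ≤ V ν' := (hV.mem hν').1
  have hne : ∀ᵐ s : ℝ, s ≠ V ν := by simp [ae_iff, measure_singleton]
  have hI := (Phi_scaled_integrable hm (V ν)).const_mul (6 * ν')
  have h1 : |∫ s in (V 0)..(V ν'), s * Hf V m ν s| ≤
      ∫ s in (V 0)..(V ν'), 6 * ν' * Phi (2 / 3 * m * |V ν - s|) := by
    rw [← Real.norm_eq_abs]
    apply intervalIntegral.norm_integral_le_of_norm_le h0 _ hI.intervalIntegrable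
    filter_upwards [hne] with s hs hs'
    exact Hf_bound hV hm hν' ⟨hs'.1.le, hs'.2⟩ hs.symm
  refine h1.trans ?_
  rw [intervalIntegral.integral_of_le h0]
  refine (setIntegral_le_integral hI (Filter.Eventually.of_forall fun s => ?_)).trans ?_
  · exact mul_nonneg (by linarith [hν'.1]) (Phi_nonneg (by positivity))
  · rw [integral_const_mul, Phi_scaled_integral hm]
    apply le_of_eq; ring

lemma abs_Th_le {V : ℝ → ℝ} (hV : Profile V) {m : ℕ} (hm : 0 < m) (ν : ℝ) :
    |Th V m ν| ≤ 18 * π * PhiConst / m :=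
  Hf_integral_bound hV hm ν ⟨Real.pi_pos.le, le_rfl⟩

lemma Th_pi_nonpos {V : ℝ → ℝ} (hV : Profile V) {m : ℕ} (hm : 0 < m) : Th V m π ≤ 0 := by
  have h0 : V 0 ≤ V π := hV.le le_rfl Real.pi_pos.le le_rfl
  unfold Th
  have h := intervalIntegral.integral_mono_on_of_le_Ioo h0
    (Hf_intble hV hm π ⟨le_rfl, h0⟩ ⟨h0, le_rfl⟩) (g := fun _ => 0) (by simp) ?_
  · simpa using h
  intro s hs
  obtain ⟨w, hw, rfl⟩ := hV.exists ⟨hs.1.le, hs.2.le⟩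
  rw [Hf_eq hV m π hw]
  exact mul_nonpos_of_nonneg_of_nonpos (hV.pos w).le
    (Qf_pi_nonpos (qf_nonneg (hV.pos _) (hV.pos _)) (qf_lt_one hm (hV.pos _) (hV.pos _) hs.2.ne')
      hw.1 hw.2)

/-- `uu R` is concave: it lies below its tangent at `ρ1`. -/
lemma uu_super {R ρ ρ1 : ℝ} (hR : 0 < R) (hρ1 : 0 < ρ1) :
    uu R ρ ≤ uu R ρ1 + R ^ 2 / (4 * max ρ1 (R ^ 2)) * (ρ - ρ1) := by
  have hA : 0 < R ^ 2 := by positivity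
  unfold uu
  generalize R ^ 2 = A at *
  have hM : 0 < max ρ A := lt_max_of_lt_right hA
  have hM1 : 0 < max ρ1 A := lt_max_of_lt_right hA
  have hl := Real.log_le_sub_one_of_pos (div_pos hM hM1)
  rw [Real.log_div hM.ne' hM1.ne'] at hl
  have h1 : 0 ≤ (1 - A / max ρ1 A) * ((max ρ A - max ρ1 A) - (ρ - ρ1)) := by
    rcases le_total ρ1 A with h | h
    · rw [max_eq_right h, div_self hA.ne']; simp
    · rw [max_eq_left h]
      refine mul_nonneg ?_ (by linarith [le_max_left ρ A])
      rw [sub_nonneg, div_le_one hρ1]; exact h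
  have h2 : A / (4 * max ρ1 A) = A / max ρ1 A / 4 := by field_simp
  have h3 : A / 4 * (max ρ A / max ρ1 A - 1) = A / max ρ1 A / 4 * (max ρ A - max ρ1 A) := by
    field_simp
  have h4 := mul_le_mul_of_nonneg_left hl (show 0 ≤ A / 4 by positivity)
  rw [h2]
  rw [h3] at h4
  generalize A / max ρ1 A = t at *
  nlinarith

/-- Quantitative concavity of `uu R` beyond `ρ = R²`. -/
lemma uu_second {R x h : ℝ} (hR : 1 / 4 ≤ R ^ 2) (hx : R ^ 2 ≤ x) (hh : 0 ≤ h)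
    (hX : x + 2 * h ≤ 9 / 4) :
    uu R x + uu R (x + 2 * h) - 2 * uu R (x + h) ≤ - (h ^ 2 / 81) := by
  unfold uu
  generalize R ^ 2 = A at *
  rw [max_eq_left hx, max_eq_left (by linarith), max_eq_left (by linarith)]
  have hx0 : 0 < x := by linarith
  have hxh : 0 < x + h := by linarith
  have hp : 0 < x * (x + 2 * h) / (x + h) ^ 2 := by positivity
  have hl := Real.log_le_sub_one_of_pos hp
  rw [Real.log_div (by positivity) (by positivity), Real.log_mul hx0.ne' (by linarith),
    Real.log_pow] at hl
  have e : x * (x + 2 * h) / (x + h) ^ 2 - 1 = - (h ^ 2 / (x + h) ^ 2) := by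
    field_simp; ring
  rw [e] at hl
  have h1 : h ^ 2 * (16 / 81) ≤ h ^ 2 / (x + h) ^ 2 := by
    rw [le_div_iff₀ (by positivity)]
    nlinarith [mul_nonneg (sq_nonneg h) (show 0 ≤ 81 / 16 - (x + h) ^ 2 by nlinarith)]
  push_cast at hl
  have hT : Real.log x + Real.log (x + 2 * h) - 2 * Real.log (x + h) ≤ - (h ^ 2 * (16 / 81)) := by
    linarith
  nlinarith [sq_nonneg h]

lemma uu_cont {V : ℝ → ℝ} (hV : Profile V) (ρ : ℝ) : Continuous fun γ => uu (V γ) ρ := by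
  have := hV.cont
  unfold uu
  have h : ∀ γ, max ρ (V γ ^ 2) ≠ 0 := fun γ =>
    (lt_max_of_lt_right (pow_pos (hV.pos γ) 2)).ne'
  have := Continuous.log (f := fun γ => max ρ (V γ ^ 2)) (by fun_prop) h
  fun_prop

lemma Wf_super {V : ℝ → ℝ} (hV : Profile V) {ρ1 : ℝ} (hρ1 : 0 < ρ1) :
    ∃ d, ∀ ρ, Wf V ρ ≤ Wf V ρ1 + d * (ρ - ρ1) := by
  refine ⟨∫ γ in (-π)..π, V γ ^ 2 / (4 * max ρ1 (V γ ^ 2)), fun ρ => ?_⟩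
  have hc : Continuous fun γ => V γ ^ 2 / (4 * max ρ1 (V γ ^ 2)) := by
    have := hV.cont
    refine Continuous.div (by fun_prop) (by fun_prop) fun γ => ?_
    have : 0 < max ρ1 (V γ ^ 2) := lt_max_of_lt_left hρ1
    positivity
  unfold Wf
  have hc' : Continuous fun γ => V γ ^ 2 / (4 * max ρ1 (V γ ^ 2)) * (ρ - ρ1) :=
    hc.mul continuous_const
  rw [← intervalIntegral.integral_mul_const, ← intervalIntegral.integral_add
    ((uu_cont hV _).intervalIntegrable _ _) (hc'.intervalIntegrable _ _)]
  exact intervalIntegral.integral_mono (by linarith [Real.pi_pos])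
    ((uu_cont hV _).intervalIntegrable _ _)
    (((uu_cont hV _).add hc').intervalIntegrable _ _)
    fun γ => uu_super (hV.pos γ) hρ1

/-- Quantitative concavity of the radial part to the right of `V ν0 ^ 2`; the arc `[-ν0, ν0]`, where
`V ≤ V ν0`, contributes. -/
lemma Wf_second {V : ℝ → ℝ} (hV : Profile V) {ν0 h : ℝ} (hν0 : ν0 ∈ Icc 0 π) (hh : 0 ≤ h)
    (hX : V ν0 ^ 2 + 2 * h ≤ 9 / 4) :
    Wf V (V ν0 ^ 2) + Wf V (V ν0 ^ 2 + 2 * h) - 2 * Wf V (V ν0 ^ 2 + h) ≤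
      - (2 * ν0 * h ^ 2 / 81) := by
  set x := V ν0 ^ 2 with hx
  have hx0 : 0 < x := pow_pos (hV.pos _) 2
  have hc := uu_cont hV
  set G : ℝ → ℝ := fun γ => uu (V γ) x + uu (V γ) (x + 2 * h) - 2 * uu (V γ) (x + h) with hG
  have hGc : Continuous G :=
    ((hc x).add (hc (x + 2 * h))).sub (continuous_const.mul (hc (x + h)))
  have hGi : ∀ a b, IntervalIntegrable G volume a b := fun a b => hGc.intervalIntegrable _ _
  have e : Wf V x + Wf V (x + 2 * h) - 2 * Wf V (x + h) = ∫ γ in (-π)..π, G γ := by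
    unfold Wf
    rw [intervalIntegral.integral_sub, intervalIntegral.integral_add,
      intervalIntegral.integral_const_mul]
    · exact (hc _).intervalIntegrable _ _
    · exact (hc _).intervalIntegrable _ _
    · exact ((hc x).add (hc (x + 2 * h))).intervalIntegrable _ _
    · exact (continuous_const.mul (hc (x + h))).intervalIntegrable _ _
  have hG0 : ∀ γ, G γ ≤ 0 := fun γ => by
    have h1 := uu_super (ρ := x) (hV.pos γ) (show 0 < x + h by linarith)
    have h2 := uu_super (ρ := x + 2 * h) (hV.pos γ) (show 0 < x + h by linarith)
    simp only [hG]; nlinarith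
  have h1 : ∀ a b, a ≤ b → ∫ γ in a..b, G γ ≤ 0 := fun a b hab => by
    have := intervalIntegral.integral_mono hab (hGi a b) (g := fun _ => 0) (by simp) hG0
    simpa using this
  have h2 : ∫ γ in (-ν0)..ν0, G γ ≤ ∫ γ in (-ν0)..ν0, - (h ^ 2 / 81) := by
    apply intervalIntegral.integral_mono_on (by linarith [hν0.1]) (hGi _ _) (by simp)
    intro γ hγ
    have hγ' : |γ| ≤ ν0 := abs_le.2 hγ
    have hle : V γ ≤ V ν0 := by rw [← hV.abs γ]; exact hV.le (abs_nonneg _) hγ' hν0.2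
    exact uu_second (by nlinarith [hV.lo γ]) (by rw [hx]; gcongr; exact (hV.pos _).le) hh hX
  rw [intervalIntegral.integral_const, smul_eq_mul] at h2
  rw [e, ← intervalIntegral.integral_add_adjacent_intervals (hGi (-π) (-ν0)) (hGi (-ν0) π),
    ← intervalIntegral.integral_add_adjacent_intervals (hGi (-ν0) ν0) (hGi ν0 π)]
  have := h1 (-π) (-ν0) (by linarith [hν0.2])
  have := h1 ν0 π hν0.2
  linarith

/-- The stream function is constant along the boundary, with the potential split into its radial
and nonradial parts. The constant `Ω` here is `π` times the angular velocity. -/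
def BdryEq (V : ℝ → ℝ) (m : ℕ) : Prop :=
  ∃ Ω C : ℝ, ∀ ν ∈ Icc 0 π, Wf V (V ν ^ 2) + Th V m ν / m = Ω * V ν ^ 2 + C

/-- The boundary equation and concavity of `Wf` make `Th` a convex function of `V²`. -/
lemma Th_sub {V : ℝ → ℝ} (hV : Profile V) {m : ℕ} (hm : 0 < m) (hE : BdryEq V m) {ν1 : ℝ}
    (hν1 : ν1 ∈ Icc 0 π) :
    ∃ d, ∀ ν ∈ Icc 0 π, Th V m ν1 + d * (V ν ^ 2 - V ν1 ^ 2) ≤ Th V m ν := by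
  obtain ⟨Ω, C, hE⟩ := hE
  obtain ⟨d, hd⟩ := Wf_super hV (pow_pos (hV.pos ν1) 2)
  refine ⟨m * (Ω - d), fun ν hν => ?_⟩
  have hm' : (0 : ℝ) < m := by exact_mod_cast hm
  have e1 := hE ν hν
  have e2 := hE ν1 hν1
  have e3 := hd (V ν ^ 2)
  have f : Th V m ν1 / m + (Ω - d) * (V ν ^ 2 - V ν1 ^ 2) ≤ Th V m ν / m := by nlinarith
  have := mul_le_mul_of_nonneg_left f hm'.le
  rw [mul_div_cancel₀ _ hm'.ne', mul_add, mul_div_cancel₀ _ hm'.ne'] at this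
  linarith

/-- Quantitative form of the convexity of `Th` as a function of `V²`. -/
lemma Th_second {V : ℝ → ℝ} (hV : Profile V) {m : ℕ} (hm : 0 < m) (hE : BdryEq V m)
    {ν0 ν1 ν2 h : ℝ} (hν0 : ν0 ∈ Icc 0 π) (hν1 : ν1 ∈ Icc 0 π) (hν2 : ν2 ∈ Icc 0 π) (hh : 0 ≤ h)
    (h1 : V ν1 ^ 2 = V ν0 ^ 2 + h) (h2 : V ν2 ^ 2 = V ν0 ^ 2 + 2 * h) :
    m * (2 * ν0 * h ^ 2 / 81) ≤ Th V m ν0 + Th V m ν2 - 2 * Th V m ν1 := by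
  obtain ⟨Ω, C, hE⟩ := hE
  have hm' : (0 : ℝ) < m := by exact_mod_cast hm
  have e0 := hE ν0 hν0
  have e1 := hE ν1 hν1
  have e2 := hE ν2 hν2
  have hX : V ν0 ^ 2 + 2 * h ≤ 9 / 4 := by
    rw [← h2]; nlinarith [hV.hi ν2, hV.pos ν2]
  have hW := Wf_second hV hν0 hh hX
  rw [h1] at e1
  rw [h2] at e2
  have f : 2 * ν0 * h ^ 2 / 81 ≤ Th V m ν0 / m + Th V m ν2 / m - 2 * (Th V m ν1 / m) := by
    nlinarith
  have := mul_le_mul_of_nonneg_left f hm'.le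
  refine this.trans (le_of_eq ?_)
  field_simp

lemma qf_small {V : ℝ → ℝ} (hV : Profile V) {m : ℕ} (hm : 0 < m) {ν s κ : ℝ}
    (hs : s ≤ 3 / 2) (hνs : V ν ≤ s) (hκ : V ν ^ 2 + κ / m ≤ s ^ 2) :
    qf m (V ν) s ≤ Real.exp (-(2 * κ / 9)) := by
  have hm' : (0 : ℝ) < m := by exact_mod_cast hm
  refine (qf_le_exp (hV.pos ν) ((hV.pos ν).trans_le hνs) (hV.hi ν) hs).trans ?_
  apply Real.exp_le_exp.2
  rw [abs_sub_comm, abs_of_nonneg (by linarith)]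
  have h1 : κ / m ≤ 3 * (s - V ν) := by nlinarith [hV.hi ν]
  rw [div_le_iff₀ hm'] at h1
  nlinarith

lemma Hf_lower {V : ℝ → ℝ} (hV : Profile V) {m : ℕ} {ν w : ℝ} (hν0 : 0 ≤ ν) (hν : ν ≤ π / 6)
    (hw : w ∈ Icc 0 π) (hq : qf m (V ν) (V w) ≤ 1 / 32) :
    qf m (V ν) (V w) * Real.sin w ≤ Hf V m ν (V w) := by
  rw [Hf_eq hV m ν hw]
  refine Qf_lower (qf_nonneg (hV.pos _) (hV.pos _)) hq hw.1 hw.2 ?_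
  have h1 := Real.cos_le_cos_of_nonneg_of_le_pi hν0 (by linarith [Real.pi_pos]) hν
  rw [Real.cos_pi_div_six] at h1
  have : (3 / 2 : ℝ) ≤ √3 := Real.le_sqrt_of_sq_le (by norm_num)
  linarith

lemma qf_gap {V : ℝ → ℝ} (hV : Profile V) {m : ℕ} (hm : 0 < m) {ν ν' κ w : ℝ}
    (hν0 : 0 ≤ ν) (hνν : ν ≤ ν') (hν' : ν' ≤ π) (hκ : Real.exp (-(2 * κ / 9)) ≤ 1 / 32)
    (h1 : V ν ^ 2 + κ / m ≤ V ν' ^ 2) (hs : V ν' ≤ V w) : qf m (V ν) (V w) ≤ 1 / 32 := by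
  refine (qf_small hV hm (hV.hi w) ((hV.le hν0 hνν hν').trans hs) ?_).trans hκ
  have : V ν' ^ 2 ≤ V w ^ 2 := by gcongr; exact (hV.pos _).le
  linarith

/-- Near the minimum of `V` the nonradial part is nonnegative. Circles of radius below `V ν'` leave
the domain along a short arc, where the kernel is nonnegative; on larger circles the kernel is
essentially its first Fourier mode, which is positive at `ν`. -/
lemma Th_nonneg {V : ℝ → ℝ} (hV : Profile V) {m : ℕ} (hm : 0 < m)
    {ν ν' κ : ℝ} (hν0 : 0 ≤ ν) (hνν : ν ≤ ν') (hν' : ν' ≤ π / 6)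
    (hκ : Real.exp (-(2 * κ / 9)) ≤ 1 / 32) (h1 : V ν ^ 2 + κ / m ≤ V ν' ^ 2) :
    0 ≤ Th V m ν := by
  have hp := Real.pi_pos
  have hν'I : ν' ∈ Icc 0 π := ⟨hν0.trans hνν, by linarith⟩
  have mν' := hV.mem hν'I
  apply intervalIntegral.integral_nonneg (mν'.1.trans mν'.2)
  intro s hs
  obtain ⟨w, hw, rfl⟩ := hV.exists hs
  apply mul_nonneg (hV.pos _).le
  rcases le_total w ν' with hwν | hwν
  · rw [Hf_eq hV m ν hw]
    exact Qf_nonneg (qf_nonneg (hV.pos _) (hV.pos _))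
      (qf_le_one (hV.pos _) (hV.pos _)) hw.1 (hwν.trans hν') hν0 (hνν.trans hν')
  · have := Hf_lower hV hν0 (hνν.trans hν') hw
      (qf_gap hV hm hν0 hνν hν'I.2 hκ h1 (hV.le hν'I.1 hwν hw.2))
    exact (mul_nonneg (qf_nonneg (hV.pos _) (hV.pos _))
      (Real.sin_nonneg_of_nonneg_of_le_pi hw.1 hw.2)).trans this

/-- Convexity, together with `Th ≤ 0` at `π`, puts a nonnegative value of `Th` on its decreasing
part. -/
lemma Th_le_Th_zero {V : ℝ → ℝ} (hV : Profile V) {m : ℕ} (hm : 0 < m) (hE : BdryEq V m)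
    {ν : ℝ} (hν : ν ∈ Icc 0 π) (hπ : ν < π) (h0 : 0 ≤ Th V m ν) : Th V m ν ≤ Th V m 0 := by
  obtain ⟨d, hd⟩ := Th_sub hV hm hE hν
  have hπI : π ∈ Icc 0 π := ⟨Real.pi_pos.le, le_rfl⟩
  have a1 := hd π hπI
  have a2 := hd 0 ⟨le_rfl, Real.pi_pos.le⟩
  have a3 := Th_pi_nonpos hV hm
  have hlt : V ν ^ 2 < V π ^ 2 := by
    have := hV.mono hν hπI hπ
    have := hV.pos ν
    gcongr
  have hle : V 0 ^ 2 ≤ V ν ^ 2 := by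
    have := (hV.mem hν).1
    have := hV.pos 0
    gcongr
  have hd0 : d ≤ 0 := by
    by_contra hcon
    have : 0 < d * (V π ^ 2 - V ν ^ 2) := mul_pos (not_le.1 hcon) (by linarith)
    linarith
  have : 0 ≤ d * (V 0 ^ 2 - V ν ^ 2) := mul_nonneg_of_nonpos_of_nonpos hd0 (by linarith)
  linarith

/-- An improved bound on `Th` at the minimum of `V`. On circles of radius beyond `V ν'` the slices at
`0` are at most `3/32` times the slices at `ν`, while `Th ν ≤ Th 0`; so those circles can be
absorbed, and the remaining ones give the factor `ν'`. -/
lemma Th_zero_le {V : ℝ → ℝ} (hV : Profile V) {m : ℕ} (hm : 0 < m) (hE : BdryEq V m)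
    {ν ν' κ : ℝ} (hν0 : 0 ≤ ν) (hνν : ν ≤ ν') (hν' : ν' ≤ π / 6)
    (hκ : Real.exp (-(2 * κ / 9)) ≤ 1 / 32)
    (h0 : V 0 ^ 2 + κ / m ≤ V ν ^ 2) (h1 : V ν ^ 2 + κ / m ≤ V ν' ^ 2) :
    Th V m 0 ≤ 36 * ν' * PhiConst / m := by
  have hp := Real.pi_pos
  have hνI : ν ∈ Icc 0 π := ⟨hν0, by linarith⟩
  have hν'I : ν' ∈ Icc 0 π := ⟨hν0.trans hνν, by linarith⟩
  have mπ : V π ∈ Icc (V 0) (V π) := hV.mem ⟨hp.le, le_rfl⟩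
  have m0 : V 0 ∈ Icc (V 0) (V π) := hV.mem ⟨le_rfl, hp.le⟩
  have mν' := hV.mem hν'I
  have hiA := fun μ => Hf_intble hV hm μ m0 mν'
  have hiB := fun μ => Hf_intble hV hm μ mν' mπ
  have hsplit : ∀ μ, Th V m μ = (∫ s in (V 0)..(V ν'), s * Hf V m μ s) +
      ∫ s in (V ν')..(V π), s * Hf V m μ s := fun μ =>
    (intervalIntegral.integral_add_adjacent_intervals (hiA μ) (hiB μ)).symm
  have hqs : ∀ w, V ν' ≤ V w → qf m (V ν) (V w) ≤ 1 / 32 := fun w hs =>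
    qf_gap hV hm hν0 hνν hν'I.2 hκ h1 hs
  have hq0 : qf m (V 0) (V ν) ≤ 1 / 32 :=
    (qf_small hV hm (hV.hi ν) (hV.mem hνI).1 h0).trans hκ
  have hmono := Th_le_Th_zero hV hm hE hνI (by linarith) (Th_nonneg hV hm hν0 hνν hν' hκ h1)
  have hcmp : ∫ s in (V ν')..(V π), s * Hf V m 0 s ≤
      ∫ s in (V ν')..(V π), 3 / 32 * (s * Hf V m ν s) := by
    apply intervalIntegral.integral_mono_on mν'.2 (hiB 0) ((hiB ν).const_mul _)
    intro s hs
    obtain ⟨w, hw, rfl⟩ := hV.exists ⟨mν'.1.trans hs.1, hs.2⟩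
    have hνw : V ν ≤ V w := (hV.le hν0 hνν hν'I.2).trans hs.1
    have n5 := hqs w hs.1
    have hl := Hf_lower hV hν0 (hνν.trans hν') hw n5
    have hmul := qf_mul (m := m) (hV.pos 0) (hV.mem hνI).1 hνw
    have n1 := qf_nonneg (m := m) (hV.pos 0) (hV.pos ν)
    have n2 := qf_nonneg (m := m) (hV.pos ν) (hV.pos w)
    have n4 := Real.sin_nonneg_of_nonneg_of_le_pi hw.1 hw.2
    have hu := Qf_upper (w := w) (qf_nonneg (m := m) (hV.pos 0) (hV.pos w))
      (by rw [hmul]; nlinarith) hw.1 hw.2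
    rw [← Hf_eq hV m 0 hw, hmul] at hu
    have n3 : 0 ≤ qf m (V ν) (V w) * Real.sin w := mul_nonneg n2 n4
    have : Hf V m 0 (V w) ≤ 3 / 32 * Hf V m ν (V w) := by nlinarith
    nlinarith [hV.pos w]
  have hA : 0 ≤ ∫ s in (V 0)..(V ν'), s * Hf V m ν s := by
    apply intervalIntegral.integral_nonneg mν'.1
    intro s hs
    obtain ⟨w, hw, rfl⟩ := hV.exists ⟨hs.1, hs.2.trans mν'.2⟩
    have hwν : w ≤ ν' := (hV.mono.le_iff_le hw hν'I).1 hs.2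
    rw [Hf_eq hV m ν hw]
    exact mul_nonneg (hV.pos _).le (Qf_nonneg (qf_nonneg (hV.pos _) (hV.pos _))
      (qf_le_one (hV.pos _) (hV.pos _)) hw.1 (hwν.trans hν') hν0 (hνν.trans hν'))
  rw [intervalIntegral.integral_const_mul] at hcmp
  have hbd := (abs_le.1 (Hf_integral_bound hV hm 0 hν'I)).2
  have s0 := hsplit 0
  have s1 := hsplit ν
  have : 36 * ν' * PhiConst / m = 2 * (18 * ν' * PhiConst / m) := by ring
  have hbd0 : 0 ≤ 18 * ν' * PhiConst / m := by
    have := PhiConst_nonneg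
    have := hν'I.1
    positivity
  rcases le_total (Th V m 0) 0 with h | h
  · linarith
  · linarith

/-- A step constant `κ` with `e^{-2κ/9} ≤ 1/32` and `κ² > 17496 * PhiConst`. -/
def kap : ℝ := 17496 * PhiConst + 144

/-- If the range of `V²` contained eight steps of length `κ/m`, then the second difference of `Th`
would violate quantitative convexity: at `ν2` if the fifth level is reached within angle `π/6`,
where `0 ≤ Th ≤ Th 0 = O(ν2 / m)`, and at `ν5 ≥ π/6` otherwise, where `|Th| = O(1/m)` suffices. -/
theorem core_bound {m : ℕ} (hm : 0 < m) {V : ℝ → ℝ} (hV : Profile V) (hE : BdryEq V m) :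
    V π - V 0 ≤ 8 * kap / m := by
  have hP := PhiConst_nonneg
  have hp := Real.pi_pos
  have hm' : (0 : ℝ) < m := by exact_mod_cast hm
  have hκ1 : 144 ≤ kap := by unfold kap; linarith
  have hκ2 : 17496 * PhiConst < kap ^ 2 := by
    have : 17496 * PhiConst < kap := by unfold kap; linarith
    nlinarith
  generalize kap = κ at *
  have hκ : Real.exp (-(2 * κ / 9)) ≤ 1 / 32 := by
    rw [Real.exp_neg, ← one_div]
    apply one_div_le_one_div_of_le (by norm_num)
    linarith [Real.add_one_le_exp (2 * κ / 9)]
  have hh : 0 < κ / m := by positivity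
  have h8 : 8 * κ / m = 8 * (κ / m) := by ring
  by_contra hcon
  push Not at hcon
  have hbig : V 0 ^ 2 + 8 * (κ / m) < V π ^ 2 := by
    have h1 : V 0 < V π := by linarith
    nlinarith [hV.lo 0, hV.lo π]
  have hex : ∀ j : ℝ, 0 ≤ j → j ≤ 8 → ∃ ν ∈ Icc 0 π, V ν ^ 2 = V 0 ^ 2 + j * (κ / m) := by
    intro j h0 h1
    have hj : 0 ≤ j * (κ / m) := by positivity
    have hj' : j * (κ / m) ≤ 8 * (κ / m) := by gcongr
    have hnn : 0 ≤ V 0 ^ 2 + j * (κ / m) := by positivity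
    obtain ⟨ν, hν, e⟩ := hV.exists (s := √(V 0 ^ 2 + j * (κ / m)))
      ⟨Real.le_sqrt_of_sq_le (by linarith), Real.sqrt_le_iff.2 ⟨(hV.pos _).le, by linarith⟩⟩
    exact ⟨ν, hν, by rw [e, Real.sq_sqrt hnn]⟩
  have hord : ∀ {x y : ℝ}, x ∈ Icc 0 π → y ∈ Icc 0 π → V x ^ 2 < V y ^ 2 → x < y := by
    intro x y hx hy h
    exact (hV.mono.lt_iff_lt hx hy).1 (lt_of_pow_lt_pow_left₀ 2 (hV.pos _).le h)
  obtain ⟨ν1, I1, e1⟩ := hex 1 (by norm_num) (by norm_num)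
  obtain ⟨ν2, I2, e2⟩ := hex 2 (by norm_num) (by norm_num)
  obtain ⟨ν3, I3, e3⟩ := hex 3 (by norm_num) (by norm_num)
  obtain ⟨ν4, I4, e4⟩ := hex 4 (by norm_num) (by norm_num)
  obtain ⟨ν5, I5, e5⟩ := hex 5 (by norm_num) (by norm_num)
  obtain ⟨ν6, I6, e6⟩ := hex 6 (by norm_num) (by norm_num)
  obtain ⟨ν7, I7, e7⟩ := hex 7 (by norm_num) (by norm_num)
  have o1 : ν1 < ν2 := hord I1 I2 (by linarith)
  have o2 : ν2 < ν3 := hord I2 I3 (by linarith)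
  have o3 : ν3 < ν4 := hord I3 I4 (by linarith)
  have o4 : ν4 < ν5 := hord I4 I5 (by linarith)
  have key : ∀ ν : ℝ, m * (2 * ν * (κ / m) ^ 2 / 81) = 2 * ν * κ ^ 2 / 81 / m := by
    intro ν; field_simp
  rcases le_total ν5 (π / 6) with h5 | h5
  · have t0 := Th_zero_le hV hm hE I1.1 o1.le (by linarith) hκ (by linarith) (by linarith)
    have t2 := Th_le_Th_zero hV hm hE I2 (by linarith)
      (Th_nonneg hV hm I2.1 o2.le (by linarith) hκ (by linarith))
    have t3 := Th_nonneg hV hm I3.1 o3.le (by linarith) hκ (by linarith)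
    have t4 := Th_le_Th_zero hV hm hE I4 (by linarith)
      (Th_nonneg hV hm I4.1 o4.le h5 hκ (by linarith))
    have hs := Th_second hV hm hE I2 I3 I4 hh.le (by linarith) (by linarith)
    rw [key] at hs
    have hν2 : 0 < ν2 := I1.1.trans_lt o1
    have : 2 * ν2 * κ ^ 2 / 81 / m ≤ 72 * ν2 * PhiConst / m := by
      have : 72 * ν2 * PhiConst / m = 2 * (36 * ν2 * PhiConst / m) := by ring
      linarith
    rw [div_le_div_iff_of_pos_right hm'] at this
    nlinarith
  · have hs := Th_second hV hm hE I5 I6 I7 hh.le (by linarith) (by linarith)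
    rw [key] at hs
    have b5 := (abs_le.1 (abs_Th_le hV hm ν5)).2
    have b6 := (abs_le.1 (abs_Th_le hV hm ν6)).1
    have b7 := (abs_le.1 (abs_Th_le hV hm ν7)).2
    have : 2 * ν5 * κ ^ 2 / 81 / m ≤ 72 * π * PhiConst / m := by
      have : 72 * π * PhiConst / m = 4 * (18 * π * PhiConst / m) := by ring
      linarith
    rw [div_le_div_iff_of_pos_right hm'] at this
    nlinarith [mul_le_mul_of_nonneg_right h5 (sq_nonneg κ)]

/-! ### Star-shaped domains in polar coordinates -/

/-- The complex number with polar coordinates `(s, φ)`; `s` may be any real number. -/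
def cpol (s φ : ℝ) : ℂ := (s : ℂ) * Complex.exp (φ * Complex.I)

lemma norm_cpol (s φ : ℝ) : ‖cpol s φ‖ = |s| := by
  simp [cpol, Complex.norm_exp_ofReal_mul_I]

lemma cpol_continuous : Continuous (Function.uncurry cpol) := by
  unfold cpol Function.uncurry; fun_prop

lemma cpol_eq_iff {R : ℝ → ℝ} (hper : Function.Periodic R (2 * π)) (hpos : ∀ θ, 0 < R θ)
    {s φ : ℝ} (hs : 0 ≤ s) : (∃ θ, cpol s φ = cpol (R θ) θ) ↔ s = R φ := by
  constructor
  · rintro ⟨θ, h⟩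
    have h1 := congrArg norm h
    rw [norm_cpol, norm_cpol, abs_of_nonneg hs, abs_of_pos (hpos θ)] at h1
    subst h1
    unfold cpol at h
    have hne : ((R θ : ℝ) : ℂ) ≠ 0 := by exact_mod_cast (hpos θ).ne'
    have h2 := mul_left_cancel₀ hne h
    obtain ⟨n, hn⟩ := Complex.exp_eq_exp_iff_exists_int.1 h2
    have h3 : φ = θ + n * (2 * π) := by
      have : (φ : ℂ) * Complex.I = ((θ + n * (2 * π) : ℝ) : ℂ) * Complex.I := by
        rw [hn]; push_cast; ring
      exact_mod_cast mul_right_cancel₀ Complex.I_ne_zero this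
    rw [h3]
    exact ((hper.int_mul n) θ).symm
  · rintro rfl; exact ⟨φ, rfl⟩

lemma preconn_frontier {S D : Set ℂ} (hS : IsPreconnected S) (hD : IsOpen D)
    (h1 : (S ∩ D).Nonempty) (h2 : (S ∩ Dᶜ).Nonempty) : (S ∩ frontier D).Nonempty := by
  by_contra hcon
  rw [not_nonempty_iff_eq_empty, hD.frontier_eq] at hcon
  have hcl : ∀ x ∈ S, x ∉ D → x ∈ (closure D)ᶜ := fun x hx hxD hxc => by
    have : x ∈ S ∩ (closure D \ D) := ⟨hx, hxc, hxD⟩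
    rw [hcon] at this; exact this
  obtain ⟨y, hy, hyD⟩ := h2
  obtain ⟨x, -, hx1, hx2⟩ := hS D (closure D)ᶜ hD isClosed_closure.isOpen_compl
    (fun x hx => by by_cases h : x ∈ D; exacts [Or.inl h, Or.inr (hcl x hx h)])
    h1 ⟨y, hy, hcl y hy hyD⟩
  exact hx2 (subset_closure hx1)

/-- A bounded nonempty open set whose boundary is a polar graph is the region below the graph: every
ray meets the boundary once, is outside `D` beyond that point, and the initial segments all contain
the origin. -/
lemma mem_iff_of_frontier {D : Set ℂ} (hD : IsOpen D) (hb : IsBounded D) (hne : D.Nonempty)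
    {R : ℝ → ℝ} (hper : Function.Periodic R (2 * π)) (hpos : ∀ θ, 0 < R θ)
    (hf : frontier D = {z | ∃ θ, z = cpol (R θ) θ}) {s φ : ℝ} (hs : 0 ≤ s) :
    cpol s φ ∈ D ↔ s < R φ := by
  have hfr : ∀ s φ : ℝ, 0 ≤ s → (cpol s φ ∈ frontier D ↔ s = R φ) := fun s φ hs => by
    rw [hf]; exact cpol_eq_iff hper hpos hs
  have hcs : ∀ φ : ℝ, Continuous fun s => cpol s φ := fun φ =>
    cpol_continuous.comp (by fun_prop : Continuous fun s : ℝ => (s, φ))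
  have hout : ∀ s φ : ℝ, R φ < s → cpol s φ ∉ D := by
    intro s φ hs hmem
    have hpre : IsPreconnected ((fun s => cpol s φ) '' Ioi (R φ)) :=
      isPreconnected_Ioi.image _ (hcs φ).continuousOn
    have hsub : (fun s => cpol s φ) '' Ioi (R φ) ⊆ D := by
      by_contra hcon
      obtain ⟨_, ⟨t, ht, rfl⟩, ht'⟩ := not_subset.1 hcon
      obtain ⟨_, ⟨t', ht1, rfl⟩, hz⟩ := preconn_frontier hpre hD
        ⟨_, ⟨s, hs, rfl⟩, hmem⟩ ⟨_, ⟨t, ht, rfl⟩, ht'⟩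
      have := (hfr t' φ ((hpos φ).le.trans (le_of_lt ht1))).1 hz
      exact (ne_of_gt ht1) this
    obtain ⟨M, hM⟩ := hb.exists_norm_le
    have hlt : R φ < max (R φ + 1) (M + 1) := lt_max_of_lt_left (lt_add_one _)
    have := hM _ (hsub ⟨max (R φ + 1) (M + 1), hlt, rfl⟩)
    rw [norm_cpol] at this
    have h2 := le_max_right (R φ + 1) (M + 1)
    linarith [le_abs_self (max (R φ + 1) (M + 1))]
  have hon : ∀ φ : ℝ, cpol (R φ) φ ∉ D := by
    intro φ hmem
    have := (hfr (R φ) φ (hpos φ).le).2 rfl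
    rw [hD.frontier_eq] at this
    exact this.2 hmem
  have hin : ∀ s t φ : ℝ, 0 ≤ s → s < R φ → 0 ≤ t → t < R φ → cpol s φ ∈ D → cpol t φ ∈ D := by
    intro s t φ hs hs' ht ht' hmem
    have hpre : IsPreconnected ((fun s => cpol s φ) '' Ico 0 (R φ)) :=
      isPreconnected_Ico.image _ (hcs φ).continuousOn
    by_contra hcon
    obtain ⟨_, ⟨t', ht1, rfl⟩, hz⟩ := preconn_frontier hpre hD
      ⟨_, ⟨s, ⟨hs, hs'⟩, rfl⟩, hmem⟩ ⟨_, ⟨t, ⟨ht, ht'⟩, rfl⟩, hcon⟩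
    exact ht1.2.ne ((hfr t' φ ht1.1).1 hz)
  have hle : ∀ s φ : ℝ, cpol s φ ∈ D → s < R φ := by
    intro s φ h
    rcases lt_trichotomy s (R φ) with h1 | h1 | h1
    · exact h1
    · subst h1; exact absurd h (hon φ)
    · exact absurd h (hout s φ h1)
  have h0 : ∀ φ, cpol 0 φ = 0 := fun φ => by simp [cpol]
  have hzero : (0 : ℂ) ∈ D := by
    obtain ⟨z, hz⟩ := hne
    have hz' : cpol ‖z‖ z.arg = z := Complex.norm_mul_exp_arg_mul_I z
    rw [← hz'] at hz
    have := hin _ 0 _ (norm_nonneg _) (hle _ _ hz) le_rfl (hpos _) hz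
    rwa [h0] at this
  refine ⟨hle s φ, fun h => ?_⟩
  exact hin 0 s φ le_rfl (hpos φ) hs h (by rwa [h0])

/-! ### Averaging over the rotations -/

lemma normSq_cpol_sub (A B α β : ℝ) :
    ‖cpol A α - cpol B β‖ ^ 2 = A ^ 2 - 2 * A * B * Real.cos (α - β) + B ^ 2 := by
  rw [← Complex.normSq_eq_norm_sq, Complex.normSq_apply, Real.cos_sub]
  simp only [cpol, Complex.sub_re, Complex.sub_im, Complex.mul_re, Complex.mul_im,
    Complex.ofReal_re, Complex.ofReal_im, Complex.exp_ofReal_mul_I_re, Complex.exp_ofReal_mul_I_im]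
  linear_combination A ^ 2 * Real.sin_sq_add_cos_sq α + B ^ 2 * Real.sin_sq_add_cos_sq β

lemma cpol_pow (r θ : ℝ) (m : ℕ) : cpol r θ ^ m = cpol (r ^ m) (m * θ) := by
  unfold cpol
  rw [mul_pow, ← Complex.exp_nat_mul]
  push_cast; ring_nf

lemma log_norm_cpol_sub {m : ℕ} (hm : 0 < m) {r s : ℝ} (hr : 0 < r) (hs : 0 < s) (h : r ≠ s)
    (α β : ℝ) : Real.log ‖cpol (r ^ m) α - cpol (s ^ m) β‖ =
      m * Real.log (max r s) - fk (qf m r s) (α - β) := by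
  have hM : 0 < max r s := lt_max_of_lt_left hr
  have hq := fk_arg_pos (qf_nonneg (m := m) hr hs) (qf_lt_one hm hr hs h) (α - β)
  have e : ‖cpol (r ^ m) α - cpol (s ^ m) β‖ ^ 2 =
      (max r s ^ m) ^ 2 * (1 - 2 * qf m r s * Real.cos (α - β) + qf m r s ^ 2) := by
    rw [normSq_cpol_sub]
    unfold qf
    rcases le_total r s with h | h
    · rw [max_eq_right h, min_eq_left h, div_pow]; field_simp; ring
    · rw [max_eq_left h, min_eq_right h, div_pow]; field_simp
  have e2 := congrArg Real.log e
  rw [Real.log_mul (by positivity) hq.ne', Real.log_pow, Real.log_pow, Real.log_pow] at e2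
  unfold fk
  push_cast at e2
  linarith

/-- The potential of `m` equidistributed charges on a circle, from the factorization of
`z ^ m - w ^ m`. -/
lemma sum_log_norm {m : ℕ} (hm : 0 < m) {r s : ℝ} (hr : 0 < r) (hs : 0 < s) (h : r ≠ s)
    (θ φ : ℝ) : ∑ j ∈ Finset.range m, Real.log ‖cpol r θ - cpol s (φ + j * (2 * π / m))‖ =
      m * Real.log (max r s) - fk (qf m r s) (m * θ - m * φ) := by
  have hm' : (m : ℝ) ≠ 0 := by positivity
  have hne : ∀ β, ‖cpol r θ - cpol s β‖ ≠ 0 := by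
    intro β hz
    have := congrArg norm (sub_eq_zero.1 (norm_eq_zero.1 hz))
    rw [norm_cpol, norm_cpol, abs_of_pos hr, abs_of_pos hs] at this
    exact h this
  rw [← log_norm_cpol_sub hm hr hs h, ← cpol_pow, ← cpol_pow]
  set ζ := Complex.exp (2 * π * Complex.I / m) with hζ
  have hprim : IsPrimitiveRoot ζ m := Complex.isPrimitiveRoot_exp m hm.ne'
  rw [hprim.pow_sub_pow_eq_prod_sub_mul (cpol r θ) (cpol s φ) hm]
  have himg : Polynomial.nthRootsFinset m (1 : ℂ) = (Finset.range m).image (fun j => ζ ^ j) := by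
    symm
    apply Finset.eq_of_subset_of_card_le
    · intro x hx
      obtain ⟨j, -, rfl⟩ := Finset.mem_image.1 hx
      rw [Polynomial.mem_nthRootsFinset hm, ← pow_mul, mul_comm, pow_mul, hprim.pow_eq_one, one_pow]
    · rw [hprim.card_nthRootsFinset, Finset.card_image_of_injOn, Finset.card_range]
      intro a ha b hb hab
      exact hprim.pow_inj (Finset.mem_range.1 ha) (Finset.mem_range.1 hb) hab
  rw [himg, Finset.prod_image]
  · rw [norm_prod, Real.log_prod]
    · refine Finset.sum_congr rfl fun j _ => ?_
      congr 3
      unfold cpol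
      rw [hζ, ← Complex.exp_nat_mul, mul_left_comm, ← Complex.exp_add]
      congr 2
      push_cast; ring
    · intro j _
      have : ζ ^ j * cpol s φ = cpol s (φ + j * (2 * π / m)) := by
        unfold cpol
        rw [hζ, ← Complex.exp_nat_mul, mul_left_comm, ← Complex.exp_add]
        congr 2
        push_cast; ring
      rw [this]; exact hne _
  · intro a ha b hb hab
    exact hprim.pow_inj (Finset.mem_range.1 ha) (Finset.mem_range.1 hb) hab

lemma ite_intble {V g : ℝ → ℝ} (hV : Continuous V) (hg : Continuous g) (s a b : ℝ) :
    IntervalIntegrable (fun γ => if s < V γ then g γ else 0) volume a b := by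
  have e : (fun γ => if s < V γ then g γ else 0) = indicator {γ | s < V γ} g := by
    ext γ; simp [indicator]
  rw [e]
  have := hg.intervalIntegrable (μ := volume) a b
  rw [intervalIntegrable_iff] at this ⊢
  exact this.indicator (measurableSet_lt measurable_const hV.measurable)

/-- Averaging over the `m` rotations reduces the angular integral to one period, rescaled to
`[-π, π]`. -/
lemma angular_symm {m : ℕ} (hm : 0 < m) {V : ℝ → ℝ} (hV : Continuous V)
    (hper : Function.Periodic V (2 * π)) {r s : ℝ} (hr : 0 < r) (hs : 0 < s) (h : r ≠ s) (θ : ℝ) :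
    ∫ φ in (-π)..π, (if s < V (m * φ - π) then Real.log ‖cpol r θ - cpol s φ‖ else 0) =
      ∫ γ in (-π)..π, if s < V γ then
        Real.log (max r s) - fk (qf m r s) (m * θ - π - γ) / m else 0 := by
  have hm_ne : (m : ℝ) ≠ 0 := by positivity
  have hm0 : (0 : ℝ) < m := by positivity
  have hne : ∀ β, ‖cpol r θ - cpol s β‖ ≠ 0 := by
    intro β hz
    have := congrArg norm (sub_eq_zero.1 (norm_eq_zero.1 hz))
    rw [norm_cpol, norm_cpol, abs_of_pos hr, abs_of_pos hs] at this
    exact h this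
  have hcs : Continuous fun φ => cpol s φ :=
    cpol_continuous.comp (by fun_prop : Continuous fun φ : ℝ => (s, φ))
  have hgc : Continuous fun φ => Real.log ‖cpol r θ - cpol s φ‖ :=
    Continuous.log (by fun_prop) hne
  have hRc : Continuous fun φ : ℝ => V (m * φ - π) := by fun_prop
  set F : ℝ → ℝ := fun φ => if s < V (m * φ - π) then Real.log ‖cpol r θ - cpol s φ‖ else 0 with hF
  set G : ℝ → ℝ := fun γ => if s < V γ then
        Real.log (max r s) - fk (qf m r s) (m * θ - π - γ) / m else 0 with hG
  have hqc := fk_continuous (qf_nonneg (m := m) hr hs) (qf_lt_one hm hr hs h)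
  have hGi : ∀ a b, IntervalIntegrable G volume a b := fun a b =>
    ite_intble hV (by fun_prop) s a b
  have hFi : ∀ a b, IntervalIntegrable F volume a b := fun a b => ite_intble hRc hgc s a b
  have hVj : ∀ (j : ℕ) (φ : ℝ), V (m * (φ + j * (2 * π / m)) - π) = V (m * φ - π) := by
    intro j φ
    have : m * (φ + j * (2 * π / m)) - π = (m * φ - π) + j * (2 * π) := by field_simp; ring
    rw [this]; exact hper.nat_mul j _
  have hcper : ∀ φ, cpol s (φ + 2 * π) = cpol s φ := by
    intro φ; unfold cpol; congr 1
    rw [Complex.exp_eq_exp_iff_exists_int]; exact ⟨1, by push_cast; ring⟩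
  have hFper : Function.Periodic F (2 * π) := by
    intro φ
    have h1 := hVj m φ
    rw [mul_div_cancel₀ _ hm_ne] at h1
    simp only [hF, h1, hcper]
  have hGper : Function.Periodic G (2 * π) := by
    intro γ
    simp only [hG, hper γ]
    rw [show m * θ - π - (γ + 2 * π) = m * θ - π - γ - 2 * π by ring,
      (fk_periodic _).sub_eq]
  -- the `m` rotations of the integral agree, and their sum is computed by `sum_log_norm`
  have hshift : ∀ j ∈ Finset.range m, ∫ φ in (-π)..π, F (φ + j * (2 * π / m)) =
      ∫ φ in (-π)..π, F φ := by
    intro j _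
    rw [intervalIntegral.integral_comp_add_right]
    have := hFper.intervalIntegral_add_eq (-π + j * (2 * π / m)) (-π)
    convert this using 2 <;> ring
  have hsum : ∀ φ, ∑ j ∈ Finset.range m, F (φ + j * (2 * π / m)) = m * G (m * φ - π) := by
    intro φ
    simp only [hF, hG, hVj]
    split_ifs with hc
    · rw [sum_log_norm hm hr hs h, show m * θ - π - (m * φ - π) = m * θ - m * φ by ring]
      field_simp
    · simp
  have h1 : m * ∫ φ in (-π)..π, F φ = m * ∫ φ in (-π)..π, G (m * φ - π) := by
    rw [← intervalIntegral.integral_const_mul, ← intervalIntegral.integral_const_mul]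
    simp_rw [← hsum]
    rw [intervalIntegral.integral_finsetSum, Finset.sum_congr rfl hshift]
    · simp [intervalIntegral.integral_const_mul]
    · intro j _
      have hc := hVj j
      simp only [hF, hc]
      exact ite_intble hRc (hgc.comp (continuous_add_const _)) s _ _
  rw [mul_left_cancel₀ hm_ne h1, intervalIntegral.integral_comp_mul_sub _ hm_ne]
  have := hGper.intervalIntegral_add_zsmul_eq (m : ℤ) (m * -π - π) hGi
  have h3 := hGper.intervalIntegral_add_eq (m * -π - π) (-π)
  rw [h3, show -π + 2 * π = π by ring] at this
  rw [show m * π - π = m * -π - π + (m : ℤ) • (2 * π) by simp; ring, this]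
  simp [hm_ne]

/-! ### Decomposition of the logarithmic potential -/

/-- The logarithmic potential of a star-shaped domain in polar coordinates. -/
lemma potential_polar {D : Set ℂ} (hD : IsOpen D) {R : ℝ → ℝ} (hR : Continuous R)
    (hhi : ∀ φ, R φ ≤ 3 / 2) (hmem : ∀ s φ : ℝ, 0 ≤ s → (cpol s φ ∈ D ↔ s < R φ))
    {r : ℝ} (hr : 0 < r) (hr' : r ≤ 3 / 2) (θ : ℝ) :
    ∫ y in D, Real.log ‖cpol r θ - y‖ = ∫ s in Ioi (0 : ℝ),
      s * ∫ φ in (-π)..π, if s < R φ then Real.log ‖cpol r θ - cpol s φ‖ else 0 := by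
  set K : ℝ × ℝ → ℝ := fun p =>
    p.1 * if p.1 < R p.2 then Real.log ‖cpol r θ - cpol p.1 p.2‖ else 0 with hK
  have hcm : Measurable fun p : ℝ × ℝ => cpol p.1 p.2 := cpol_continuous.measurable
  have hKm : Measurable K := by
    refine measurable_fst.mul (Measurable.ite ?_ ?_ measurable_const)
    · exact measurableSet_lt measurable_fst (hR.measurable.comp measurable_snd)
    · exact Real.measurable_log.comp (measurable_const.sub hcm).norm
  have hg : IntegrableOn (fun s : ℝ => 3 / 2 * (|Real.log (r - s)| + Real.log 3)) (Ioc 0 (3 / 2)) := by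
    have h1 : IntervalIntegrable (fun s => Real.log (r - s)) volume 0 (3 / 2) := by
      have := (intervalIntegral.intervalIntegrable_log' (a := r - 0) (b := r - 3 / 2)).comp_sub_left r
      simpa using this
    rw [intervalIntegrable_iff_integrableOn_Ioc_of_le (by norm_num)] at h1
    exact (h1.abs.add (integrableOn_const (by simp))).const_mul _
  have hg2 : Integrable (indicator (Ioc 0 (3 / 2)) fun s : ℝ =>
      3 / 2 * (|Real.log (r - s)| + Real.log 3)) (volume.restrict (Ioi 0)) :=
    (hg.integrable_indicator measurableSet_Ioc).integrableOn
  have hKi : Integrable K ((volume.restrict (Ioi (0 : ℝ))).prod (volume.restrict (Ioo (-π) π))) := by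
    refine (hg2.comp_fst _).mono' hKm.aestronglyMeasurable ?_
    rw [Measure.prod_restrict]
    have hne : ∀ᵐ p : ℝ × ℝ ∂(volume.prod volume), p.1 ≠ r := by
      have : ∀ᵐ s : ℝ, s ≠ r := by simp [ae_iff, measure_singleton]
      exact Measure.quasiMeasurePreserving_fst.ae this
    filter_upwards [ae_restrict_mem (measurableSet_Ioi.prod measurableSet_Ioo),
      ae_restrict_of_ae hne] with p hp hpr
    have hp0 : 0 < p.1 := hp.1
    simp only [hK]
    split_ifs with hlt
    · have hs : p.1 ≤ 3 / 2 := hlt.le.trans (hhi _)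
      rw [indicator_of_mem (show p.1 ∈ Ioc 0 (3 / 2) from ⟨hp0, hs⟩), norm_mul,
        Real.norm_of_nonneg hp0.le]
      have hpos : 0 < |r - p.1| := abs_pos.2 (sub_ne_zero.2 (Ne.symm hpr))
      have l1 : |r - p.1| ≤ ‖cpol r θ - cpol p.1 p.2‖ := by
        have := abs_norm_sub_norm_le (cpol r θ) (cpol p.1 p.2)
        rwa [norm_cpol, norm_cpol, abs_of_pos hr, abs_of_pos hp0] at this
      have l2 : ‖cpol r θ - cpol p.1 p.2‖ ≤ 3 := by
        have := norm_sub_le (cpol r θ) (cpol p.1 p.2)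
        rw [norm_cpol, norm_cpol, abs_of_pos hr, abs_of_pos hp0] at this
        linarith
      have l3 := Real.log_le_log hpos l1
      have l4 := Real.log_le_log (hpos.trans_le l1) l2
      rw [Real.log_abs] at l3
      have l5 : (0 : ℝ) ≤ Real.log 3 := Real.log_nonneg (by norm_num)
      apply mul_le_mul hs _ (norm_nonneg _) (by norm_num)
      rw [Real.norm_eq_abs, abs_le]
      constructor
      · linarith [neg_abs_le (Real.log (r - p.1))]
      · linarith [abs_nonneg (Real.log (r - p.1))]
    · simp only [mul_zero, norm_zero]
      apply indicator_nonneg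
      intro s _
      have l5 : (0 : ℝ) ≤ Real.log 3 := Real.log_nonneg (by norm_num)
      positivity
  rw [← integral_indicator hD.measurableSet, ← Complex.integral_comp_polarCoord_symm,
    polarCoord_target]
  have hcongr : ∫ p in Ioi (0 : ℝ) ×ˢ Ioo (-π) π, p.1 • (D.indicator (fun y =>
      Real.log ‖cpol r θ - y‖) (Complex.polarCoord.symm p)) =
      ∫ p in Ioi (0 : ℝ) ×ˢ Ioo (-π) π, K p := by
    apply setIntegral_congr_fun (measurableSet_Ioi.prod measurableSet_Ioo)
    intro p hp
    have e : Complex.polarCoord.symm p = cpol p.1 p.2 := by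
      rw [Complex.polarCoord_symm_apply]; unfold cpol
      rw [Complex.exp_mul_I]; push_cast; rfl
    simp only [hK, e, smul_eq_mul, indicator, hmem p.1 p.2 (le_of_lt hp.1)]
  rw [hcongr, Measure.volume_eq_prod, ← Measure.prod_restrict, integral_prod K hKi]
  apply integral_congr_ae
  filter_upwards with s
  simp only [hK]
  rw [integral_const_mul, intervalIntegral.integral_of_le (by linarith [Real.pi_pos]),
    integral_Ioc_eq_integral_Ioo]

lemma uu_eq {r R : ℝ} (hr : 0 < r) (hR : 0 < R) :
    ∫ s in (0 : ℝ)..R, s * Real.log (max r s) = uu R (r ^ 2) := by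
  have hlow : ∀ t, 0 ≤ t → t ≤ r → ∫ s in (0 : ℝ)..t, s * Real.log (max r s) =
      t ^ 2 / 2 * Real.log r := by
    intro t ht htr
    rw [intervalIntegral.integral_congr (g := fun s => s * Real.log r),
      intervalIntegral.integral_mul_const, integral_id]
    · ring
    · intro s hs
      rw [uIcc_of_le ht] at hs
      simp only [max_eq_left (hs.2.trans htr)]
  unfold uu
  rcases le_total R r with h | h
  · rw [hlow R hR.le h, max_eq_left (by gcongr), Real.log_pow]; push_cast; ring
  · have hc : Continuous fun s : ℝ => s * Real.log (max r s) :=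
      continuous_id.mul (Continuous.log (by fun_prop) fun s => (lt_max_of_lt_left hr).ne')
    rw [max_eq_right (by gcongr), Real.log_pow,
      ← intervalIntegral.integral_add_adjacent_intervals (hc.intervalIntegrable 0 r)
        (hc.intervalIntegrable r R), hlow r hr.le le_rfl]
    have : ∫ s in r..R, s * Real.log (max r s) =
        (R ^ 2 / 2 * Real.log R - R ^ 2 / 4) - (r ^ 2 / 2 * Real.log r - r ^ 2 / 4) := by
      apply intervalIntegral.integral_eq_sub_of_hasDerivAt
        (f := fun s => s ^ 2 / 2 * Real.log s - s ^ 2 / 4) _ (hc.intervalIntegrable _ _)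
      intro s hs
      rw [uIcc_of_le h] at hs
      have hs0 : 0 < s := hr.trans_le hs.1
      rw [max_eq_right hs.1]
      have d1 := (((hasDerivAt_pow 2 s).div_const 2).mul (Real.hasDerivAt_log hs0.ne')).sub
        ((hasDerivAt_pow 2 s).div_const 4)
      refine d1.congr_deriv ?_
      simp; field_simp; ring
    rw [this]; push_cast; ring

lemma radial_part {V : ℝ → ℝ} (hV : Profile V) {r : ℝ} (hr : 0 < r) :
    IntegrableOn (fun s => s * ∫ γ in (-π)..π, if s < V γ then Real.log (max r s) else 0)
      (Ioi 0) ∧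
    ∫ s in Ioi (0 : ℝ), (s * ∫ γ in (-π)..π, if s < V γ then Real.log (max r s) else 0) =
      Wf V (r ^ 2) := by
  have hpi := Real.pi_pos
  have hc : Continuous fun s : ℝ => s * Real.log (max r s) :=
    continuous_id.mul (Continuous.log (by fun_prop) fun s => (lt_max_of_lt_left hr).ne')
  set K : ℝ × ℝ → ℝ := fun p =>
    if p.1 < V p.2 then p.1 * Real.log (max r p.1) else 0 with hK
  have hKm : Measurable K := by
    refine Measurable.ite ?_ ?_ measurable_const
    · exact measurableSet_lt measurable_fst (hV.cont.measurable.comp measurable_snd)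
    · exact hc.measurable.comp measurable_fst
  have hg : IntegrableOn (fun s : ℝ => |s * Real.log (max r s)|) (Ioc 0 (3 / 2)) := by
    rw [← intervalIntegrable_iff_integrableOn_Ioc_of_le (by norm_num)]
    exact hc.abs.intervalIntegrable _ _
  have hg2 : Integrable (indicator (Ioc 0 (3 / 2)) fun s : ℝ => |s * Real.log (max r s)|)
      (volume.restrict (Ioi 0)) :=
    (hg.integrable_indicator measurableSet_Ioc).integrableOn
  have hKi : Integrable K ((volume.restrict (Ioi (0 : ℝ))).prod (volume.restrict (Ioc (-π) π))) := by
    refine (hg2.comp_fst _).mono' hKm.aestronglyMeasurable ?_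
    rw [Measure.prod_restrict]
    filter_upwards [ae_restrict_mem (measurableSet_Ioi.prod measurableSet_Ioc)] with p hp
    have hp0 : 0 < p.1 := hp.1
    simp only [hK]
    split_ifs with hlt
    · rw [indicator_of_mem (show p.1 ∈ Ioc 0 (3 / 2) from ⟨hp0, hlt.le.trans (hV.hi _)⟩)]
      exact le_rfl
    · rw [norm_zero]
      exact indicator_nonneg (fun s _ => abs_nonneg _) _
  have e : ∀ s, s * ∫ γ in (-π)..π, (if s < V γ then Real.log (max r s) else 0) =
      ∫ γ in Ioc (-π) π, K (s, γ) := by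
    intro s
    rw [← intervalIntegral.integral_const_mul, intervalIntegral.integral_of_le (by linarith)]
    simp only [hK, mul_ite, mul_zero]
  simp_rw [e]
  refine ⟨hKi.integral_prod_left, ?_⟩
  rw [integral_integral_swap (f := fun s γ => K (s, γ)) hKi]
  unfold Wf
  rw [intervalIntegral.integral_of_le (by linarith)]
  apply integral_congr_ae
  filter_upwards with γ
  rw [← uu_eq hr (hV.pos γ), intervalIntegral.integral_of_le (hV.pos γ).le,
    integral_Ioc_eq_integral_Ioo]
  have e2 : (fun s => K (s, γ)) = indicator (Iio (V γ)) fun s => s * Real.log (max r s) := by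
    ext s; simp [hK, indicator]
  rw [e2, setIntegral_indicator measurableSet_Iio, Ioi_inter_Iio]

/-- By the mean-zero property, slices inside the domain may be traded for slices outside it; both
vanish unless the circle crosses the boundary. -/
lemma nonradial_slice {V : ℝ → ℝ} (hV : Profile V) {m : ℕ} (hm : 0 < m) {ν s : ℝ}
    (hν : ν ∈ Icc 0 π) (hs : 0 < s) (h : V ν ≠ s) :
    ∫ γ in (-π)..π, (if s < V γ then fk (qf m (V ν) s) (ν - γ) else 0) =
      indicator (Ioc (V 0) (V π)) (fun s => - Hf V m ν s) s := by
  have hpi := Real.pi_pos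
  have hrange : ∀ γ ∈ Icc (-π) π, V 0 ≤ V γ ∧ V γ ≤ V π := by
    intro γ hγ
    rw [← hV.abs γ]
    exact hV.mem ⟨abs_nonneg _, abs_le.2 hγ⟩
  have hνr := hV.mem hν
  have hq0 := qf_nonneg (m := m) (hV.pos ν) hs
  have hq1 := qf_lt_one hm (hV.pos ν) hs h
  have hfc : Continuous fun γ => fk (qf m (V ν) s) (ν - γ) :=
    (fk_continuous hq0 hq1).comp (by fun_prop)
  by_cases hI : s ∈ Ioc (V 0) (V π)
  · rw [indicator_of_mem hI]
    unfold Hf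
    have i1 := ite_intble hV.cont hfc s (-π) π
    have i2 : IntervalIntegrable (fun γ => if V γ < s then fk (qf m (V ν) s) (ν - γ) else 0)
        volume (-π) π := by
      have := ite_intble (V := fun γ => - V γ) hV.cont.neg hfc (-s) (-π) π
      simpa using this
    rw [eq_neg_iff_add_eq_zero, ← intervalIntegral.integral_add i1 i2]
    refine Eq.trans ?_ (fk_mean hq0 hq1 ν)
    apply intervalIntegral.integral_congr_ae
    obtain ⟨w, hw, rfl⟩ := hV.exists ⟨hI.1.le, hI.2⟩
    have hw1 : ∀ᵐ γ : ℝ, γ ≠ w := by simp [ae_iff, measure_singleton]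
    have hw2 : ∀ᵐ γ : ℝ, γ ≠ -w := by simp [ae_iff, measure_singleton]
    filter_upwards [hw1, hw2] with γ h1 h2 hγ
    rw [uIoc_of_le (by linarith)] at hγ
    have hne : V γ ≠ V w := by
      intro he
      rw [← hV.abs γ] at he
      have := hV.mono.injOn ⟨abs_nonneg _, abs_le.2 ⟨hγ.1.le, hγ.2⟩⟩ hw he
      rcases abs_choice γ with h | h
      · exact h1 (by rw [← h, this])
      · exact h2 (by linarith)
    rcases lt_or_gt_of_ne hne with hlt | hlt
    · simp [hlt, hlt.not_gt]
    · simp [hlt, hlt.not_gt]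
  · rw [indicator_of_notMem hI]
    rcases le_or_gt s (V 0) with h1 | h1
    · have hne0 : ∀ᵐ γ : ℝ, γ ≠ 0 := by simp [ae_iff, measure_singleton]
      refine Eq.trans ?_ (fk_mean hq0 hq1 ν)
      apply intervalIntegral.integral_congr_ae
      filter_upwards [hne0] with γ h0 hγ
      rw [uIoc_of_le (by linarith)] at hγ
      have : V 0 < V γ := by
        rw [← hV.abs γ]
        exact hV.mono ⟨le_rfl, hpi.le⟩ ⟨abs_nonneg _, abs_le.2 ⟨hγ.1.le, hγ.2⟩⟩ (abs_pos.2 h0)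
      rw [if_pos (h1.trans_lt this)]
    · have h2 : V π < s := by
        by_contra hc; exact hI ⟨h1, not_lt.1 hc⟩
      rw [intervalIntegral.integral_congr (g := fun _ => 0)]
      · simp
      · intro γ hγ
        rw [uIcc_of_le (by linarith)] at hγ
        have := (hrange γ hγ).2
        simp only
        rw [if_neg (by linarith)]

lemma nonradial_part {V : ℝ → ℝ} (hV : Profile V) {m : ℕ} (hm : 0 < m) {ν : ℝ}
    (hν : ν ∈ Icc 0 π) :
    IntegrableOn (fun s => s * ∫ γ in (-π)..π, if s < V γ then fk (qf m (V ν) s) (ν - γ) else 0)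
      (Ioi 0) ∧
    ∫ s in Ioi (0 : ℝ), (s * ∫ γ in (-π)..π, if s < V γ then fk (qf m (V ν) s) (ν - γ) else 0) =
      - Th V m ν := by
  have hpi := Real.pi_pos
  have h0π : V 0 ≤ V π := hV.le le_rfl hpi.le le_rfl
  have hae : (indicator (Ioc (V 0) (V π)) fun s => - (s * Hf V m ν s)) =ᵐ[volume.restrict (Ioi 0)]
      (fun s => s * ∫ γ in (-π)..π, if s < V γ then fk (qf m (V ν) s) (ν - γ) else 0) := by
    have hne : ∀ᵐ s : ℝ, s ≠ V ν := by simp [ae_iff, measure_singleton]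
    filter_upwards [ae_restrict_mem measurableSet_Ioi, ae_restrict_of_ae hne] with s hs hs'
    rw [nonradial_slice hV hm hν hs hs'.symm]
    by_cases hI : s ∈ Ioc (V 0) (V π)
    · simp [indicator_of_mem hI]
    · simp [indicator_of_notMem hI]
  have hHf := Hf_intble hV hm ν (a := V 0) (b := V π) ⟨le_rfl, h0π⟩ ⟨h0π, le_rfl⟩
  rw [intervalIntegrable_iff_integrableOn_Ioc_of_le h0π] at hHf
  constructor
  · exact ((hHf.neg.integrable_indicator measurableSet_Ioc).integrableOn).congr hae
  · rw [← integral_congr_ae hae, setIntegral_indicator measurableSet_Ioc, integral_neg,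
      inter_eq_right.2 (show Ioc (V 0) (V π) ⊆ Ioi 0 from fun s hs => (hV.pos 0).trans hs.1)]
    unfold Th
    rw [intervalIntegral.integral_of_le h0π]

/-- The logarithmic potential at a boundary point, split into radial and nonradial parts. -/
theorem potential_eq {D : Set ℂ} (hD : IsOpen D) {V : ℝ → ℝ} (hV : Profile V)
    (hper : Function.Periodic V (2 * π)) {m : ℕ} (hm : 0 < m)
    (hmem : ∀ s φ : ℝ, 0 ≤ s → (cpol s φ ∈ D ↔ s < V (m * φ - π))) {ν : ℝ} (hν : ν ∈ Icc 0 π) :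
    ∫ y in D, Real.log ‖cpol (V ν) ((ν + π) / m) - y‖ = Wf V (V ν ^ 2) + Th V m ν / m := by
  have hm' : (m : ℝ) ≠ 0 := by positivity
  have hVc := hV.cont
  rw [potential_polar hD (R := fun φ => V (m * φ - π)) (by fun_prop) (fun φ => hV.hi _) hmem
    (hV.pos ν) (hV.hi ν)]
  obtain ⟨i1, e1⟩ := radial_part hV (hV.pos ν)
  obtain ⟨i2, e2⟩ := nonradial_part hV hm hν
  have : Wf V (V ν ^ 2) + Th V m ν / m = Wf V (V ν ^ 2) - (1 / m) * (- Th V m ν) := by ring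
  rw [this, ← e1, ← e2, ← integral_const_mul, ← integral_sub i1 (i2.const_mul _)]
  apply integral_congr_ae
  have hne : ∀ᵐ s : ℝ, s ≠ V ν := by simp [ae_iff, measure_singleton]
  filter_upwards [ae_restrict_mem measurableSet_Ioi, ae_restrict_of_ae hne] with s hs hs'
  have hfc : Continuous fun γ => fk (qf m (V ν) s) (ν - γ) :=
    (fk_continuous (qf_nonneg (hV.pos ν) hs) (qf_lt_one hm (hV.pos ν) hs hs'.symm)).comp
      (by fun_prop)
  rw [angular_symm hm hV.cont hper (hV.pos ν) hs hs'.symm, mul_left_comm, ← mul_sub,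
    ← intervalIntegral.integral_const_mul (1 / (m : ℝ)), ← intervalIntegral.integral_sub
      (ite_intble hV.cont continuous_const s _ _) ((ite_intble hV.cont hfc s _ _).const_mul _)]
  congr 2
  ext γ
  rw [show m * ((ν + π) / m) - π - γ = ν - γ by field_simp; ring]
  split_ifs <;> ring

/-! ### Transfer to the patch problem -/

/-- The isometry between the complex plane and `ℝ²`. -/
def cEquiv : ℂ ≃ₗᵢ[ℝ] R2 := Complex.orthonormalBasisOneI.repr

lemma polar_eq (r θ : ℝ) : polar r θ = cEquiv (cpol r θ) := by
  ext i
  fin_cases i <;>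
    simp [polar, pt, cEquiv, cpol, Complex.exp_ofReal_mul_I_re, Complex.exp_ofReal_mul_I_im]

lemma patchConv_eq (D : Set R2) (x : ℂ) :
    2 * π * patchConv D (cEquiv x) = ∫ y in cEquiv ⁻¹' D, Real.log ‖x - y‖ := by
  have hmp : MeasurePreserving cEquiv := cEquiv.measurePreserving
  have hme : MeasurableEmbedding cEquiv := cEquiv.toHomeomorph.measurableEmbedding
  unfold patchConv
  rw [← hmp.setIntegral_preimage_emb hme, ← integral_const_mul]
  congr 1
  ext y
  unfold nker
  rw [← map_sub, LinearIsometryEquiv.norm_map]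
  field_simp

lemma volume_pre (D : Set R2) : volume (cEquiv ⁻¹' D) = volume D :=
  MeasurePreserving.measure_preimage_emb cEquiv.measurePreserving
    cEquiv.toHomeomorph.measurableEmbedding D

lemma abs_le_supNorm {u : ℝ → ℝ} (hu : Continuous u) {T : ℝ} (hT : 0 < T)
    (hper : Function.Periodic u T) (θ : ℝ) : |u θ| ≤ supNorm u := by
  have hc : IsCompact (range fun θ => |u θ|) :=
    Function.Periodic.compact_of_continuous (f := fun θ => |u θ|) (c := T)
      (fun θ => by simp only [hper θ]) hT.ne' hu.abs
  exact le_ciSup hc.bddAbove θ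

/-- Evenness and periodicity of `u` make `u` even about `π/m` as well, so the shifted profile is
even. -/
lemma profile_of {m : ℕ} (hm : 0 < m) {u : ℝ → ℝ} (hu : Continuous u)
    (heven : ∀ θ, u (-θ) = u θ) (hper : Function.Periodic u (2 * π / m))
    (hder : ∀ θ ∈ Ioo (0 : ℝ) (π / m), deriv u θ < 0) (hsup : supNorm u ≤ 1 / 2) :
    Profile fun γ => 1 + u ((π + γ) / m) := by
  have hm' : (0 : ℝ) < m := by exact_mod_cast hm
  have hT : (0 : ℝ) < 2 * π / m := by have := Real.pi_pos; positivity
  have hrefl : ∀ γ, u ((π + γ) / m) = u ((π - γ) / m) := by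
    intro γ
    rw [← heven ((π - γ) / m), ← hper (-((π - γ) / m))]
    congr 1; field_simp; ring
  have hb := fun θ => abs_le.1 ((abs_le_supNorm hu hT hper θ).trans hsup)
  have hanti : StrictAntiOn u (Icc 0 (π / m)) :=
    strictAntiOn_of_deriv_neg (convex_Icc _ _) hu.continuousOn (by rwa [interior_Icc])
  refine ⟨by fun_prop, fun γ => ?_, ?_, fun γ => ?_, fun γ => ?_⟩
  · rw [hrefl γ, sub_eq_add_neg]
  · intro x hx y hy hxy
    simp only
    rw [hrefl x, hrefl y]
    have : u ((π - x) / m) < u ((π - y) / m) := by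
      apply hanti
      · exact ⟨div_nonneg (by linarith [hy.2]) hm'.le, by gcongr; linarith [hy.1]⟩
      · exact ⟨div_nonneg (by linarith [hx.2]) hm'.le, by gcongr; linarith [hx.1]⟩
      · gcongr
    linarith
  · linarith [(hb ((π + γ) / m)).1]
  · linarith [(hb ((π + γ) / m)).2]

lemma Profile.range_of_periodic {V : ℝ → ℝ} (hV : Profile V) (hper : Function.Periodic V (2 * π))
    (γ : ℝ) : V γ ∈ Icc (V 0) (V π) := by
  have hp := Real.pi_pos
  obtain ⟨γ', hIco, e⟩ := hper.exists_mem_Ico (by linarith) γ (-π)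
  rw [e, ← hV.abs γ']
  exact hV.mem ⟨abs_nonneg _, abs_le.2 ⟨hIco.1, by linarith [hIco.2]⟩⟩

/-- A domain of area `π` neither lies strictly inside nor strictly contains the unit disk. -/
lemma area_bounds {D : Set ℂ} (hvol : volume D = ENNReal.ofReal π) {R : ℝ → ℝ} {a b : ℝ}
    (ha : 0 < a) (hR : ∀ φ, R φ ∈ Icc a b)
    (hmem : ∀ s φ : ℝ, 0 ≤ s → (cpol s φ ∈ D ↔ s < R φ)) : a ≤ 1 ∧ 1 ≤ b := by
  have hp := Real.pi_pos
  have hb : 0 < b := ha.trans_le ((hR 0).1.trans (hR 0).2)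
  have hz : ∀ z : ℂ, cpol ‖z‖ z.arg = z := Complex.norm_mul_exp_arg_mul_I
  have hball : ∀ t : ℝ, 0 < t → volume (Metric.ball (0 : ℂ) t) = ENNReal.ofReal (t ^ 2 * π) := by
    intro t ht
    rw [Complex.volume_ball, ENNReal.ofReal_mul (by positivity), ENNReal.ofReal_pow ht.le]
    congr 1
    rw [← NNReal.coe_real_pi, ENNReal.ofReal_coe_nnreal]
  have h1 : Metric.ball (0 : ℂ) a ⊆ D := by
    intro z hz'
    rw [mem_ball_zero_iff] at hz'
    rw [← hz z, hmem _ _ (norm_nonneg _)]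
    exact hz'.trans_le (hR _).1
  have h2 : D ⊆ Metric.ball (0 : ℂ) b := by
    intro z hz'
    rw [← hz z, hmem _ _ (norm_nonneg _)] at hz'
    rw [mem_ball_zero_iff]
    exact hz'.trans_le (hR _).2
  have v1 := measure_mono (μ := volume) h1
  have v2 := measure_mono (μ := volume) h2
  rw [hvol, hball a ha, ENNReal.ofReal_le_ofReal_iff hp.le] at v1
  rw [hvol, hball b hb, ENNReal.ofReal_le_ofReal_iff (by positivity)] at v2
  have w1 : a ^ 2 ≤ 1 := le_of_mul_le_mul_right (by linarith) hp
  have w2 : 1 ≤ b ^ 2 := le_of_mul_le_mul_right (by linarith) hp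
  constructor <;> nlinarith

/-- Star-shaped `m`-fold symmetric rotating patches of area `π` with
`‖u‖_{L∞} ≤ 1/2` satisfy `‖u‖_{L∞} ≤ c/m` for `m ≥ m₀`. -/
theorem starshaped_linfty_bound :
    ∃ c > (0 : ℝ), ∃ m₀ : ℕ, 3 ≤ m₀ ∧
      ∀ (m : ℕ), m₀ ≤ m → ∀ (D : Set R2) (Ω : ℝ) (u : ℝ → ℝ),
        IsPatchSolution D Ω → volume D = ENNReal.ofReal π →
        ContDiff ℝ 2 u → (∀ θ : ℝ, -1 < u θ) →
        (∀ θ : ℝ, u (-θ) = u θ) → Function.Periodic u (2 * π / m) →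
        (∀ θ ∈ Set.Ioo (0 : ℝ) (π / m), deriv u θ < 0) →
        supNorm u ≤ 1/2 →
        frontier D = polarGraph u →
        supNorm u ≤ c / m := by
  have hpi := Real.pi_pos
  have hκ : 0 < kap := by unfold kap; linarith [PhiConst_nonneg]
  refine ⟨8 * kap, by linarith, 3, le_rfl, ?_⟩
  intro m hm3 D Ω u hsol hvol hu hlow heven hper hder hsup hfr
  obtain ⟨hopen, hbdd, -, -, c, hc⟩ := hsol
  have hm : 0 < m := by omega
  have hm' : (0 : ℝ) < m := by exact_mod_cast hm
  set V : ℝ → ℝ := fun γ => 1 + u ((π + γ) / m) with hVdef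
  have hV : Profile V := profile_of hm hu.continuous heven hper hder hsup
  have hVper : Function.Periodic V (2 * π) := by
    intro γ
    simp only [hVdef]
    rw [← hper ((π + γ) / m)]
    congr 2; field_simp; ring
  have hVR : ∀ φ, V (m * φ - π) = 1 + u φ := by
    intro φ; simp only [hVdef]; congr 2; field_simp; ring
  have hRper : Function.Periodic (fun φ => V (m * φ - π)) (2 * π) := by
    intro φ
    simp only [hVR]
    have := hper.nat_mul m φ
    rw [mul_div_cancel₀ _ hm'.ne'] at this
    rw [this]
  have hopen' : IsOpen (cEquiv ⁻¹' D) := hopen.preimage cEquiv.continuous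
  have hvol' : volume (cEquiv ⁻¹' D) = ENNReal.ofReal π := by rw [volume_pre, hvol]
  have hbdd' : IsBounded (cEquiv ⁻¹' D) := by
    obtain ⟨M, hM⟩ := hbdd.exists_norm_le
    refine isBounded_iff_forall_norm_le.2 ⟨M, fun z hz => ?_⟩
    rw [← cEquiv.norm_map z]; exact hM _ hz
  have hne : (cEquiv ⁻¹' D).Nonempty := by
    rw [nonempty_iff_ne_empty]
    intro h
    rw [h, measure_empty] at hvol'
    exact (ENNReal.ofReal_pos.2 hpi).ne hvol'
  have hfr' : frontier (cEquiv ⁻¹' D) = {z | ∃ θ, z = cpol ((fun φ => V (m * φ - π)) θ) θ} := by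
    have : cEquiv ⁻¹' frontier D = frontier (cEquiv ⁻¹' D) :=
      cEquiv.toHomeomorph.preimage_frontier D
    rw [← this, hfr]
    ext z
    simp only [polarGraph, mem_preimage, mem_ofPred_eq, polar_eq, hVR,
      cEquiv.injective.eq_iff]
  have hmem : ∀ s φ : ℝ, 0 ≤ s → (cpol s φ ∈ cEquiv ⁻¹' D ↔ s < V (m * φ - π)) :=
    fun s φ hs => mem_iff_of_frontier hopen' hbdd' hne hRper (fun θ => hV.pos _) hfr' hs
  have hE : BdryEq V m := by
    refine ⟨π * Ω, 2 * π * c, fun ν hν => ?_⟩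
    rw [← potential_eq hopen' hV hVper hm hmem hν, ← patchConv_eq]
    have hon : cEquiv (cpol (V ν) ((ν + π) / m)) ∈ frontier D := by
      rw [hfr]
      refine ⟨(ν + π) / m, ?_⟩
      rw [polar_eq, add_comm ν π]
    have := hc _ hon
    unfold streamFun at this
    rw [LinearIsometryEquiv.norm_map, norm_cpol, sq_abs] at this
    linear_combination 2 * π * this
  have hcore := core_bound hm hV hE
  have hrange : ∀ φ, V (m * φ - π) ∈ Icc (V 0) (V π) := fun φ =>
    hV.range_of_periodic hVper _
  obtain ⟨ha, hb⟩ := area_bounds hvol' (hV.pos 0) hrange hmem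
  refine (ciSup_le fun θ => ?_).trans hcore
  have := hrange θ
  rw [hVR] at this
  rw [abs_le]
  constructor <;> linarith [this.1, this.2]
end
end

section
/- There exists a universal constant C > 0 such that for every integer m ≥ 3 and all real numbers a, b ∈ (0, 1), ∫_0^1 x^{−1−2/m} · ( arctan( a·x/(1 − x) ) − arctan( a·x/(1 − b·x) ) ) dx ≤ C·(1 − b). -/
/-!
The substitution `s = 1/x - 1` explains the bound. With `δ = 1 - b` and `G s = arctan (s / a)`,
the identity `arctan p = π/2 - arctan p⁻¹` for `p > 0` turns the difference of arctangents into
`G (s + δ) - G s ≥ 0`, while `x ^ (-1 - 2/m) ≤ x⁻²` because `m ≥ 3`; and `x⁻² dx` is the measure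
`ds` up to orientation. So the integral is at most `∫₀^∞ (G (s + δ) - G s) ds`, which telescopes
and is at most `δ π/2`, since `0 ≤ G ≤ π/2` on `[0, ∞)`. Hence `C = π/2` works.

In place of an improper change of variables, the argument uses the primitive
`x ↦ -∫ u in (1/x - 1)..(1/x - 1 + δ), G u` of the majorant on `[ε, 1]`
(`integral_majorant_le`), then lets `ε → 0`.
-/

open MeasureTheory Set Real Bornology

noncomputable section

/-- The pointwise bound behind `s = 1/x - 1`: the integrand is at most
`x⁻² (arctan ((s + (1 - b)) / a) - arctan (s / a))`. -/
lemma integrand_le_majorant {m : ℕ} (hm : 3 ≤ m) {a b x : ℝ} (ha : 0 < a) (hb : b < 1)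
    (hx0 : 0 < x) (hx1 : x < 1) :
    x ^ (-1 - 2 / (m : ℝ)) * (Real.arctan (a * x / (1 - x)) - Real.arctan (a * x / (1 - b * x)))
      ≤ (x ^ 2)⁻¹ * (Real.arctan ((x⁻¹ - 1 + (1 - b)) / a) - Real.arctan ((x⁻¹ - 1) / a)) := by
  have hs : 0 < x⁻¹ - 1 := by
    have := (one_lt_inv₀ hx0).2 hx1
    linarith
  have hbx : 0 < 1 - b * x := by nlinarith
  have e1 : a * x / (1 - x) = ((x⁻¹ - 1) / a)⁻¹ := by
    have : 1 - x ≠ 0 := by linarith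
    field_simp
  have e2 : a * x / (1 - b * x) = ((x⁻¹ - 1 + (1 - b)) / a)⁻¹ := by
    have h : x⁻¹ - 1 + (1 - b) = (1 - b * x) / x := by field_simp; ring
    rw [h]
    field_simp
  rw [e1, e2, Real.arctan_inv_of_pos (by positivity),
    Real.arctan_inv_of_pos (div_pos (by linarith) ha)]
  have hmono : Real.arctan ((x⁻¹ - 1) / a) ≤ Real.arctan ((x⁻¹ - 1 + (1 - b)) / a) := by
    apply Real.arctan_strictMono.monotone
    gcongr
    linarith
  have hw : x ^ (-1 - 2 / (m : ℝ)) ≤ (x ^ 2)⁻¹ := by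
    have h : (x ^ 2)⁻¹ = x ^ (-2 : ℝ) := by
      rw [Real.rpow_neg hx0.le]; norm_num
    rw [h]
    apply Real.rpow_le_rpow_of_exponent_ge hx0 hx1.le
    have hm' : (3 : ℝ) ≤ m := by exact_mod_cast hm
    have : 2 / (m : ℝ) ≤ 1 := by rw [div_le_one (by linarith)]; linarith
    linarith
  calc _ = x ^ (-1 - 2 / (m : ℝ)) * (Real.arctan ((x⁻¹ - 1 + (1 - b)) / a)
        - Real.arctan ((x⁻¹ - 1) / a)) := by ring
    _ ≤ _ := mul_le_mul_of_nonneg_right hw (by linarith)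

lemma continuousOn_majorant (a d ε : ℝ) (hε : 0 < ε) :
    ContinuousOn (fun x : ℝ => (x ^ 2)⁻¹ *
      (Real.arctan ((x⁻¹ - 1 + d) / a) - Real.arctan ((x⁻¹ - 1) / a))) (Icc ε 1) := by
  have hne : ∀ x ∈ Icc ε 1, x ≠ 0 := fun x hx => (hε.trans_le hx.1).ne'
  have hinv : ContinuousOn (fun x : ℝ => x⁻¹) (Icc ε 1) := continuousOn_id.inv₀ hne
  refine ContinuousOn.mul ((continuousOn_id.pow 2).inv₀ fun x hx => pow_ne_zero 2 (hne x hx)) ?_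
  exact (Real.continuous_arctan.comp_continuousOn
      (((hinv.sub continuousOn_const).add continuousOn_const).div_const a)).sub
    (Real.continuous_arctan.comp_continuousOn ((hinv.sub continuousOn_const).div_const a))

/-- The truncated majorant telescopes, with a bound uniform in the truncation `ε`. -/
lemma integral_majorant_le {a d ε : ℝ} (ha : 0 < a) (hd : 0 < d) (hε : 0 < ε) (hε1 : ε ≤ 1) :
    (∫ x in ε..1, (x ^ 2)⁻¹ *
      (Real.arctan ((x⁻¹ - 1 + d) / a) - Real.arctan ((x⁻¹ - 1) / a))) ≤ π / 2 * d := by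
  set G : ℝ → ℝ := fun u => Real.arctan (u / a) with hG
  have hGc : Continuous G := Real.continuous_arctan.comp (continuous_id.div_const a)
  set H : ℝ → ℝ := fun u => ∫ v in (0 : ℝ)..u, G v with hH
  have hHd : ∀ u, HasDerivAt H (G u) u := fun u => hGc.integral_hasStrictDerivAt 0 u |>.hasDerivAt
  have hder : ∀ x ∈ uIcc ε 1, HasDerivAt (fun x => -(H (x⁻¹ - 1 + d) - H (x⁻¹ - 1)))
      ((x ^ 2)⁻¹ * (Real.arctan ((x⁻¹ - 1 + d) / a) - Real.arctan ((x⁻¹ - 1) / a))) x := by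
    intro x hx
    rw [uIcc_of_le hε1] at hx
    have hx0 : x ≠ 0 := (hε.trans_le hx.1).ne'
    have hs : HasDerivAt (fun x : ℝ => x⁻¹ - 1) (-(x ^ 2)⁻¹) x := (hasDerivAt_inv hx0).sub_const 1
    have h1 := (hHd (x⁻¹ - 1 + d)).comp x (hs.add_const d)
    have h2 := (hHd (x⁻¹ - 1)).comp x hs
    refine ((h1.sub h2).neg).congr_deriv ?_
    simp only [hG]
    ring
  rw [intervalIntegral.integral_eq_sub_of_hasDerivAt hder
    ((continuousOn_majorant a d ε hε).intervalIntegrable_of_Icc hε1)]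
  have hdiff : ∀ u, H (u + d) - H u = ∫ v in u..(u + d), G v := fun u =>
    intervalIntegral.integral_interval_sub_left (hGc.intervalIntegrable _ _)
      (hGc.intervalIntegrable _ _)
  have hup : ∀ u, H (u + d) - H u ≤ π / 2 * d := by
    intro u
    rw [hdiff]
    calc (∫ v in u..(u + d), G v) ≤ ∫ _ in u..(u + d), π / 2 :=
          intervalIntegral.integral_mono_on (by linarith) (hGc.intervalIntegrable _ _)
            intervalIntegrable_const fun v _ => (Real.arctan_lt_pi_div_two _).le
      _ = π / 2 * d := by rw [intervalIntegral.integral_const, smul_eq_mul]; ring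
  have hlow : 0 ≤ H ((1 : ℝ)⁻¹ - 1 + d) - H ((1 : ℝ)⁻¹ - 1) := by
    rw [hdiff]
    refine intervalIntegral.integral_nonneg (by linarith) fun v hv => ?_
    have hv0 : 0 ≤ v := by simpa using hv.1
    exact Real.arctan_nonneg.2 (by positivity)
  linarith [hup (ε⁻¹ - 1)]

/-- A uniform arctan integral inequality. -/
theorem arctan_integral_bound :
    ∃ C > (0 : ℝ), ∀ m : ℕ, 3 ≤ m → ∀ a b : ℝ,
      a ∈ Set.Ioo (0 : ℝ) 1 → b ∈ Set.Ioo (0 : ℝ) 1 →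
      (∫ x in (0 : ℝ)..1, x ^ (-1 - 2 / (m : ℝ)) *
          (Real.arctan (a * x / (1 - x)) - Real.arctan (a * x / (1 - b * x))))
        ≤ C * (1 - b) := by
  refine ⟨π / 2, by positivity, fun m hm a b ha hb => ?_⟩
  have hd : 0 < 1 - b := by linarith [hb.2]
  set f : ℝ → ℝ := fun x => x ^ (-1 - 2 / (m : ℝ)) *
    (Real.arctan (a * x / (1 - x)) - Real.arctan (a * x / (1 - b * x))) with hf
  -- In the non-integrable case the integral is `0` by convention, so integrability of `f`
  -- need not be established.
  by_cases hfint : IntervalIntegrable f volume 0 1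
  swap
  · rw [intervalIntegral.integral_undef hfint]
    positivity
  have hcont : ContinuousOn (fun ε => ∫ x in ε..1, f x) (uIcc 0 1) :=
    intervalIntegral.continuousOn_primitive_interval_left
      (by rwa [uIcc_of_le zero_le_one, ← intervalIntegrable_iff_integrableOn_Icc_of_le zero_le_one])
  have hlim : Filter.Tendsto (fun ε => ∫ x in ε..1, f x) (nhdsWithin 0 (Ioo 0 1))
      (nhds (∫ x in (0 : ℝ)..1, f x)) :=
    (hcont 0 left_mem_uIcc).mono_left
      (nhdsWithin_mono _ (by rw [uIcc_of_le zero_le_one]; exact Ioo_subset_Icc_self))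
  have : (nhdsWithin (0 : ℝ) (Ioo 0 1)).NeBot := by
    rw [nhdsWithin_Ioo_eq_nhdsGT zero_lt_one]; infer_instance
  refine le_of_tendsto hlim ?_
  filter_upwards [self_mem_nhdsWithin] with ε hε
  refine le_trans ?_ (integral_majorant_le ha.1 hd hε.1 hε.2.le)
  -- Only the open interval matters: at `x = 1` the quotient `a * x / (1 - x)` is a junk value.
  refine intervalIntegral.integral_mono_on_of_le_Ioo hε.2.le
    (hfint.mono_set ?_)
    ((continuousOn_majorant a (1 - b) ε hε.1).intervalIntegrable_of_Icc hε.2.le)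
    fun x hx => integrand_le_majorant hm ha.1 hb.2 (hε.1.trans hx.1) hx.2
  rw [uIcc_of_le hε.2.le, uIcc_of_le zero_le_one]
  exact Icc_subset_Icc_left hε.1.le
end
end

section
/- There exists a universal constant C > 0 such that for every integer m ≥ 3 and every real number a ∈ (0, 1), ∫_0^1 x^{−1−2/m} · log( 1 + a·x/(1 − x)² ) dx ≤ C·√a. -/
/-!
With `p = -1 - 2 / m ≥ -5 / 3`, the integrand is bounded by
`4 a x ^ (-2 / 3) + 4 log (1 + a / (1 - x) ^ 2)` on `(0, 1)` (`integrand_le`). The first term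
integrates to `12 a`. The second has an explicit antiderivative, which shows that its integral is at
most `4 (a + π √a)` (`integral_log_model`). Since `a ≤ √a` and `π ≤ 4`, the constant `32` works.
-/

open MeasureTheory Set Real Bornology

noncomputable section

lemma integrable_log_model (a : ℝ) (ha : 0 < a) :
    IntervalIntegrable (fun t : ℝ => Real.log (t ^ 2 + a) - 2 * Real.log t) volume 0 1 := by
  have h1 : Continuous fun t : ℝ => Real.log (t ^ 2 + a) :=
    Continuous.log (by fun_prop) fun t => by positivity
  exact (h1.intervalIntegrable 0 1).sub (intervalIntegral.intervalIntegrable_log'.const_mul 2)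

/-- The model integral near the endpoint `x = 1`, with `t = 1 - x`. The integrand is
`log (1 + a / t ^ 2)`, and an antiderivative is
`t * log (1 + a / t ^ 2) + 2 * √a * arctan (t / √a)`. -/
lemma integral_log_model (a : ℝ) (ha : 0 < a) :
    (∫ t in (0 : ℝ)..1, (Real.log (t ^ 2 + a) - 2 * Real.log t)) ≤ a + π * √a := by
  have hs : 0 < √a := Real.sqrt_pos.mpr ha
  have hsq : √a ^ 2 = a := Real.sq_sqrt ha.le
  have key := intervalIntegral.integral_eq_sub_of_hasDerivAt_of_le (a := 0) (b := 1)
    (f := fun t => t * Real.log (t ^ 2 + a) - 2 * (t * Real.log t)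
      + 2 * √a * Real.arctan (t / √a))
    (f' := fun t => Real.log (t ^ 2 + a) - 2 * Real.log t) zero_le_one
    ?_ ?_ (integrable_log_model a ha)
  · rw [key]
    have h1 : Real.log (1 + a) ≤ a := by
      have := Real.log_le_sub_one_of_pos (show 0 < 1 + a by linarith)
      linarith
    have h2 : Real.arctan (1 / √a) ≤ π / 2 := (Real.arctan_lt_pi_div_two _).le
    simp only [one_pow, one_mul, Real.log_one, zero_div, Real.arctan_zero, zero_mul, mul_zero]
    nlinarith
  · apply Continuous.continuousOn
    have h1 : Continuous fun t : ℝ => Real.log (t ^ 2 + a) :=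
      Continuous.log (by fun_prop) fun t => by positivity
    have h2 := Real.continuous_mul_log
    have h3 : Continuous fun t : ℝ => Real.arctan (t / √a) :=
      Real.continuous_arctan.comp (by fun_prop)
    fun_prop
  · intro t ht
    have ht0 : t ≠ 0 := ht.1.ne'
    have hta : t ^ 2 + a ≠ 0 := by positivity
    have h1 : HasDerivAt (fun t : ℝ => Real.log (t ^ 2 + a)) (2 * t / (t ^ 2 + a)) t := by
      have := ((hasDerivAt_pow 2 t).add_const a).log hta
      simpa using this
    have h2 := Real.hasDerivAt_mul_log ht0
    have h3 := ((hasDerivAt_id t).div_const (√a)).arctan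
    have h := (((hasDerivAt_id t).mul h1).sub (h2.const_mul 2)).add (h3.const_mul (2 * √a))
    refine h.congr_deriv ?_
    have h4 : 1 + (t / √a) ^ 2 = (t ^ 2 + a) / a := by
      rw [div_pow, hsq]; field_simp; ring
    simp only [id, h4]
    have h5 : 2 * √a * (1 / ((t ^ 2 + a) / a) * (1 / √a)) = 2 * a / (t ^ 2 + a) := by
      field_simp
    rw [h5]
    field_simp
    ring

/-- The majorant: the first term controls `x ≤ 1 / 2` through `log (1 + y) ≤ y`, the second one
controls `x > 1 / 2`, where the power of `x` is bounded by `4`. -/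
lemma integrand_le (p a x : ℝ) (hp : -5 / 3 ≤ p) (ha : 0 < a) (hx0 : 0 < x) (hx1 : x < 1) :
    x ^ p * Real.log (1 + a * x / (1 - x) ^ 2) ≤
      4 * a * x ^ (-2 / 3 : ℝ)
        + 4 * (Real.log ((1 - x) ^ 2 + a) - 2 * Real.log (1 - x)) := by
  have h1x : 0 < 1 - x := by linarith
  have hy : 0 ≤ a * x / (1 - x) ^ 2 := by positivity
  have hlog0 : 0 ≤ Real.log (1 + a * x / (1 - x) ^ 2) := Real.log_nonneg (by linarith)
  have hpow : x ^ p ≤ x ^ (-5 / 3 : ℝ) :=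
    Real.rpow_le_rpow_of_exponent_ge hx0 hx1.le hp
  have hmodel : Real.log ((1 - x) ^ 2 + a) - 2 * Real.log (1 - x)
      = Real.log (1 + a / (1 - x) ^ 2) := by
    have : 1 + a / (1 - x) ^ 2 = ((1 - x) ^ 2 + a) / (1 - x) ^ 2 := by field_simp
    rw [this, Real.log_div (by positivity) (by positivity), Real.log_pow]
    norm_num
  have hya : a * x / (1 - x) ^ 2 ≤ a / (1 - x) ^ 2 := by
    gcongr
    nlinarith
  have hmono : Real.log (1 + a * x / (1 - x) ^ 2) ≤ Real.log (1 + a / (1 - x) ^ 2) :=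
    Real.log_le_log (by linarith) (by linarith)
  have hfirst : 0 ≤ 4 * a * x ^ (-2 / 3 : ℝ) := by positivity
  rw [hmodel]
  rcases le_total x (1 / 2) with hx | hx
  · have hle : Real.log (1 + a * x / (1 - x) ^ 2) ≤ 4 * a * x := by
      have h := Real.log_le_sub_one_of_pos (show 0 < 1 + a * x / (1 - x) ^ 2 by linarith)
      have h' : a * x / (1 - x) ^ 2 ≤ 4 * a * x := by
        rw [div_le_iff₀ (by positivity)]
        have hsq : 1 ≤ 4 * (1 - x) ^ 2 := by nlinarith
        nlinarith [mul_le_mul_of_nonneg_left hsq (mul_pos ha hx0).le]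
      linarith
    have hx23 : x ^ (-2 / 3 : ℝ) = x ^ (-5 / 3 : ℝ) * x := by
      rw [← Real.rpow_add_one hx0.ne']; norm_num
    calc x ^ p * Real.log (1 + a * x / (1 - x) ^ 2)
        ≤ x ^ (-5 / 3 : ℝ) * (4 * a * x) := by gcongr
      _ = 4 * a * x ^ (-2 / 3 : ℝ) := by rw [hx23]; ring
      _ ≤ _ := by linarith
  · have h4 : x ^ p ≤ 4 := by
      refine hpow.trans ?_
      calc x ^ (-5 / 3 : ℝ) ≤ x ^ (-2 : ℝ) :=
            Real.rpow_le_rpow_of_exponent_ge hx0 hx1.le (by norm_num)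
        _ = (x ^ 2)⁻¹ := by rw [Real.rpow_neg hx0.le]; norm_num
        _ ≤ 4 := by
            rw [inv_le_comm₀ (by positivity) (by norm_num)]
            nlinarith
    have : x ^ p * Real.log (1 + a * x / (1 - x) ^ 2)
        ≤ 4 * Real.log (1 + a / (1 - x) ^ 2) := by gcongr
    linarith

/-- A uniform logarithmic integral inequality. -/
theorem log_integral_bound :
    ∃ C > (0 : ℝ), ∀ m : ℕ, 3 ≤ m → ∀ a : ℝ, a ∈ Set.Ioo (0 : ℝ) 1 →
      (∫ x in (0 : ℝ)..1, x ^ (-1 - 2 / (m : ℝ)) *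
          Real.log (1 + a * x / (1 - x) ^ 2))
        ≤ C * Real.sqrt a := by
  refine ⟨32, by norm_num, fun m hm a ⟨ha, ha1⟩ => ?_⟩
  have hp : -5 / 3 ≤ -1 - 2 / (m : ℝ) := by
    have hm' : (3 : ℝ) ≤ m := by exact_mod_cast hm
    have : 2 / (m : ℝ) ≤ 2 / 3 := by gcongr
    linarith
  have hi1 : IntervalIntegrable (fun x : ℝ => 4 * a * x ^ (-2 / 3 : ℝ)) volume 0 1 :=
    (intervalIntegral.intervalIntegrable_rpow' (by norm_num)).const_mul _
  have hi2 : IntervalIntegrable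
      (fun x : ℝ => 4 * (Real.log ((1 - x) ^ 2 + a) - 2 * Real.log (1 - x))) volume 0 1 := by
    have h := ((integrable_log_model a ha).comp_sub_left 1).symm
    simp only [sub_zero, sub_self] at h
    exact h.const_mul 4
  have hmaj : (∫ x in (0 : ℝ)..1, x ^ (-1 - 2 / (m : ℝ)) *
          Real.log (1 + a * x / (1 - x) ^ 2)) ≤
      ∫ x in (0 : ℝ)..1, (4 * a * x ^ (-2 / 3 : ℝ)
        + 4 * (Real.log ((1 - x) ^ 2 + a) - 2 * Real.log (1 - x))) := by
    have hi := (intervalIntegrable_iff_integrableOn_Ioo_of_le zero_le_one).mp (hi1.add hi2)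
    rw [intervalIntegral.integral_of_le zero_le_one, intervalIntegral.integral_of_le zero_le_one,
      integral_Ioc_eq_integral_Ioo, integral_Ioc_eq_integral_Ioo]
    -- Only the majorant has to be integrable, because the integrand is nonnegative.
    refine integral_mono_of_nonneg ?_ hi ?_
    · filter_upwards [ae_restrict_mem measurableSet_Ioo] with x hx
      have h0 : 0 < x := hx.1
      have : 0 ≤ a * x / (1 - x) ^ 2 := by positivity
      exact mul_nonneg (Real.rpow_nonneg h0.le _) (Real.log_nonneg (by linarith))
    · filter_upwards [ae_restrict_mem measurableSet_Ioo] with x hx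
      exact integrand_le _ a x hp ha hx.1 hx.2
  have e1 : (∫ x in (0 : ℝ)..1, 4 * a * x ^ (-2 / 3 : ℝ)) = 12 * a := by
    rw [intervalIntegral.integral_const_mul, integral_rpow (Or.inl (by norm_num)),
      Real.one_rpow, Real.zero_rpow (by norm_num)]
    ring
  have e2 : (∫ x in (0 : ℝ)..1, 4 * (Real.log ((1 - x) ^ 2 + a) - 2 * Real.log (1 - x)))
      ≤ 4 * (a + π * √a) := by
    rw [intervalIntegral.integral_const_mul, intervalIntegral.integral_comp_sub_left
      (fun t => Real.log (t ^ 2 + a) - 2 * Real.log t) 1, sub_self, sub_zero]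
    linarith [integral_log_model a ha]
  rw [intervalIntegral.integral_add hi1 hi2, e1] at hmaj
  have hs : 0 < √a := Real.sqrt_pos.mpr ha
  have has : a ≤ √a := Real.le_sqrt_of_sq_le (by nlinarith)
  nlinarith [mul_le_mul_of_nonneg_right Real.pi_le_four hs.le]
end
end
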